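/- Let Ω ⊂ ℝ^d be a bounded open set with Lipschitz boundary, let p > d−1, and let W : Ω×ℝ^{m×d} → [0,+∞) satisfy Assumption 1 and additionally x ↦ W(x,ξ) ∈ L¹(Ω) for every ξ ∈ ℝ^{m×d}. Let g ∈ W^{1,∞}(Ω)^m. Then for every u ∈ g + W^{1,p}_0(Ω)^m there exists a sequence u_n ∈ g + C_c^∞(Ω)^m such that u_n → u strongly in W^{1,p}(Ω)^m and ∫_Ω W(x, Du_n) dx → ∫_Ω W(x, Du) dx. In particular, inf over g + W^{1,p}_0(Ω)^m of ∫_Ω W(x, Du) dx equals the inf over g + C_c^∞(Ω)^m. -/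

import Mathlib

open MeasureTheory Metric Set Filter
open scoped ENNReal Topology NNReal RealInnerProductSpace

noncomputable section

/-- `ℝ^d` as a Euclidean space. -/
abbrev Euc (d : ℕ) := EuclideanSpace ℝ (Fin d)

/-- The space `ℝ^{m×d}` of `m×d` matrices. -/
abbrev Mat (m d : ℕ) := Fin m → Fin d → ℝ

/-- Frobenius (Euclidean) norm of an `m×d` matrix. -/
def frobNorm {m d : ℕ} (ξ : Mat m d) : ℝ :=
  Real.sqrt (∑ i, ∑ j, ξ i j ^ 2)

/-- `φ ∈ C_c^∞(Ω)^m`: a smooth function with compact support contained in `Ω`. -/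
def IsCcSmooth {d m : ℕ} (Ω : Set (Euc d)) (φ : Euc d → Euc m) : Prop :=
  ContDiff ℝ (⊤ : ℕ∞) φ ∧ HasCompactSupport φ ∧ tsupport φ ⊆ Ω

/-- The (classical) Jacobian matrix of a differentiable map. -/
def smoothJac {d m : ℕ} (φ : Euc d → Euc m) (x : Euc d) : Mat m d :=
  fun i j => fderiv ℝ φ x (EuclideanSpace.single j 1) i

/-- `Du` is the weak Jacobian of `u` on `Ω` (integration by parts against test functions). -/
def IsWeakJacobianOn {d m : ℕ} (Ω : Set (Euc d)) (u : Euc d → Euc m)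
    (Du : Euc d → Mat m d) : Prop :=
  ∀ φ : Euc d → ℝ, ContDiff ℝ (⊤ : ℕ∞) φ → HasCompactSupport φ → tsupport φ ⊆ Ω →
    ∀ (i : Fin m) (j : Fin d),
      ∫ x in Ω, u x i * fderiv ℝ φ x (EuclideanSpace.single j 1) =
        - ∫ x in Ω, Du x i j * φ x

/-- `u ∈ W^{1,p}(Ω)^m` with weak Jacobian `Du`. -/
def MemW1p {d m : ℕ} (Ω : Set (Euc d)) (p : ℝ≥0∞) (u : Euc d → Euc m)
    (Du : Euc d → Mat m d) : Prop :=
  MemLp u p (volume.restrict Ω) ∧ MemLp Du p (volume.restrict Ω) ∧ IsWeakJacobianOn Ω u Du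

/-- Strong convergence `uₙ → v` in `W^{1,p}(Ω)^m` (together with the Jacobians). -/
def TendstoW1p {d m : ℕ} (Ω : Set (Euc d)) (p : ℝ≥0∞)
    (u : ℕ → Euc d → Euc m) (Du : ℕ → Euc d → Mat m d)
    (v : Euc d → Euc m) (Dv : Euc d → Mat m d) : Prop :=
  Tendsto (fun n => eLpNorm (u n - v) p (volume.restrict Ω)) atTop (𝓝 0) ∧
  Tendsto (fun n => eLpNorm (Du n - Dv) p (volume.restrict Ω)) atTop (𝓝 0)

/-- `v ∈ W_0^{1,p}(Ω)^m`, i.e. `v ∈ W^{1,p}` and `v` is a `W^{1,p}`-limit of functions in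
`C_c^∞(Ω)^m`. -/
def MemW1p0 {d m : ℕ} (Ω : Set (Euc d)) (p : ℝ≥0∞) (v : Euc d → Euc m)
    (Dv : Euc d → Mat m d) : Prop :=
  MemW1p Ω p v Dv ∧
  ∃ w : ℕ → Euc d → Euc m, (∀ n, IsCcSmooth Ω (w n)) ∧
    TendstoW1p Ω p w (fun n => smoothJac (w n)) v Dv

/-- `Ω` has Lipschitz boundary: near each boundary point, `Ω` is the subgraph of a Lipschitz
function over a hyperplane. -/
def HasLipschitzBoundary {d : ℕ} (Ω : Set (Euc d)) : Prop :=
  ∀ x ∈ frontier Ω, ∃ (ν : Euc d) (r L : ℝ) (ψ : Euc d → ℝ),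
    ‖ν‖ = 1 ∧ 0 < r ∧ 0 ≤ L ∧ LipschitzWith (Real.toNNReal L) ψ ∧
    ∀ y ∈ ball x r, (y ∈ Ω ↔ ⟪y, ν⟫ < ψ (y - ⟪y, ν⟫ • ν))

/-- Convexity of a `[0,+∞]`-valued function. -/
def ConvexENNReal {m d : ℕ} (f : Mat m d → ℝ≥0∞) : Prop :=
  ∀ ξ η : Mat m d, ∀ t : ℝ, 0 ≤ t → t ≤ 1 →
    f (t • ξ + (1 - t) • η) ≤ ENNReal.ofReal t * f ξ + ENNReal.ofReal (1 - t) * f η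

/-- The convex biconjugate `f**` of a `[0,+∞]`-valued function: the supremum of all affine
minorants of `f`. -/
def biconj {m d : ℕ} (f : Mat m d → ℝ≥0∞) (ξ : Mat m d) : ℝ≥0∞ :=
  ⨆ (L : Mat m d →ₗ[ℝ] ℝ) (c : ℝ) (_ : ∀ η, ENNReal.ofReal (L η + c) ≤ f η),
    ENNReal.ofReal (L ξ + c)

/-- Assumption (a4): the local stability estimate
`W(x,ξ) ≤ C_M (ess inf_{y ∈ B̄_δ(x) ∩ Ω} W(y,·))**(ξ) + α_M(x)` for `|ξ| ≤ M δ^{-d/p}`. -/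
def StabilityEstimate {d m : ℕ} (Ω : Set (Euc d)) (p : ℝ)
    (W : Euc d → Mat m d → ℝ≥0∞) : Prop :=
  ∀ M : ℝ, 1 < M → ∃ (CM δ₀ : ℝ) (αM : Euc d → ℝ≥0∞),
    0 < CM ∧ 0 < δ₀ ∧ (∫⁻ x in Ω, αM x) < ⊤ ∧
    ∀ δ : ℝ, 0 < δ → δ < δ₀ → ∀ x ∈ Ω, ∀ ξ : Mat m d,
      frobNorm ξ ≤ M * δ ^ (-(d : ℝ) / p) →
      W x ξ ≤ ENNReal.ofReal CM *
          biconj (fun η => essInf (fun y => W y η) (volume.restrict (closedBall x δ ∩ Ω))) ξ +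
        αM x

/-- Assumption 1 of the paper (items (a1)–(a4)) for the integrand `W` on `Ω`, with lower
growth exponent `p`. -/
def Assumption1 {d m : ℕ} (Ω : Set (Euc d)) (p : ℝ) (W : Euc d → Mat m d → ℝ≥0∞) : Prop :=
  Measurable (Function.uncurry W) ∧
  (∀ᵐ x ∂volume.restrict Ω, ConvexENNReal (W x) ∧ LowerSemicontinuous (W x)) ∧
  (∀ᵐ x ∂volume.restrict Ω, ∀ ξ, ENNReal.ofReal (frobNorm ξ ^ p) ≤ W x ξ) ∧
  ((p ≤ (d : ℝ) - 1 →
      ∃ (C q : ℝ) (α : Euc d → ℝ≥0∞), 0 < C ∧ p < q ∧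
        (p < (d : ℝ) - 1 → q ≤ ((d : ℝ) - 1) * p / ((d : ℝ) - 1 - p)) ∧
        (∫⁻ x in Ω, α x) < ⊤ ∧
        ∀ᵐ x ∂volume.restrict Ω, ∀ ξ,
          W x ξ ≤ ENNReal.ofReal (C * frobNorm ξ ^ q) + α x) ∧
    ((d : ℝ) - 1 < p →
      ∃ θ : ℝ, 0 < θ ∧
        (∫⁻ x in Ω, ⨆ ξ ∈ {ξ : Mat m d | frobNorm ξ ≤ θ}, W x ξ) < ⊤)) ∧
  StabilityEstimate Ω p W

/-!
The approximants of `v` are `φ = (w * ρ_ε) ∘ S` with `w ∈ C_c^∞(Ω)^m` so close to `v` in `W^{1,p}`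
that `w * ρ_ε` and its derivative are uniformly close to `v * ρ_ε` and `Dv * ρ_ε`, and with
`S x = x + ε N(T x)`. The smooth field `N` points outwards along the Lipschitz boundary, which makes
`φ` compactly supported in `Ω`. The map `T`, close to the identity, is constant near every point
around which `∫ |Dv|^p` over a ball of radius `δ ~ ε` exceeds `c δ`. Elsewhere Hölder's inequality
gives `|Dv * ρ_ε| ≲ δ^{(1-d)/p}`, so the chain-rule error of `S` is `≲ δ · δ^{(1-d)/p}`, which tends
to `0` exactly when `p > d - 1`. Hence `Dφ` is uniformly close to local averages of `Dv` at scale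
`δ`, that is, to integrals against kernels dominated by normalized Lebesgue measure on balls.

Such averages are bounded by `M δ^{-d/p}`, so (a4) applies to them, and Jensen's inequality for the
affine minorants in the biconjugate bounds `W(x, average)` by the average of `W(y, Dg + Dv)`, up to
integrable terms. The uniformly bounded errors are absorbed by convexity after replacing `φ` with
`s φ`, `s < 1`; dominated convergence, with an `L^1`-convergent dominating sequence, then gives the
energies of `s φ`, and finally `s → 1`. If the energy of `u` is infinite, Fatou's lemma suffices.
-/

section LocalAverages

open ProbabilityTheory (Kernel)

/-- Generalized dominated convergence: the dominating functions `G + e n` may vary, as long as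
`e n → 0` both almost everywhere and in mean. -/
theorem tendsto_lintegral_of_le_add {α : Type*} [MeasurableSpace α] {μ : Measure α}
    {h e : ℕ → α → ℝ≥0∞} {h' G : α → ℝ≥0∞} (h_meas : ∀ n, AEMeasurable (h n) μ)
    (e_meas : ∀ n, AEMeasurable (e n) μ) (hG : ∫⁻ x, G x ∂μ ≠ ⊤)
    (e_mean : Tendsto (fun n => ∫⁻ x, e n x ∂μ) atTop (𝓝 0))
    (e_ae : ∀ᵐ x ∂μ, Tendsto (fun n => e n x) atTop (𝓝 0))
    (h_le : ∀ᶠ n in atTop, ∀ᵐ x ∂μ, h n x ≤ G x + e n x)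
    (h_lim : ∀ᵐ x ∂μ, Tendsto (fun n => h n x) atTop (𝓝 (h' x))) :
    Tendsto (fun n => ∫⁻ x, h n x ∂μ) atTop (𝓝 (∫⁻ x, h' x ∂μ)) := by
  have sub_lim : Tendsto (fun n => ∫⁻ x, (h n x - e n x) ∂μ) atTop (𝓝 (∫⁻ x, h' x ∂μ)) := by
    refine tendsto_lintegral_filter_of_dominated_convergence' G
      (Eventually.of_forall fun n => (h_meas n).sub (e_meas n)) ?_ hG ?_
    · filter_upwards [h_le] with n hn
      filter_upwards [hn] with x hx using tsub_le_iff_right.2 hx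
    · filter_upwards [e_ae, h_lim] with x hex hhx
      simpa using ENNReal.Tendsto.sub hhx hex (Or.inr ENNReal.zero_ne_top)
  refine tendsto_of_tendsto_of_tendsto_of_le_of_le sub_lim (by simpa using sub_lim.add e_mean)
    (fun n => lintegral_mono fun x => tsub_le_self) fun n => ?_
  calc ∫⁻ x, h n x ∂μ ≤ ∫⁻ x, (h n x - e n x + e n x) ∂μ :=
        lintegral_mono fun x => le_tsub_add
    _ = _ := lintegral_add_right' _ (e_meas n)

variable {E F : Type*} [NormedAddCommGroup E] [MeasurableSpace E] [NormedAddCommGroup F]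

/-- `κ` is a Markov kernel whose measure at `x` is dominated by `C` times the uniform probability
on the ball of radius `δ` around `x`, so that `x ↦ ∫ f dκ(x)` is a local average of `f` at
scale `δ`. -/
structure IsLocalAverage (μ : Measure E) (κ : Kernel E E) (δ : ℝ) (C : ℝ≥0) : Prop where
  radius_pos : 0 < δ
  isProbabilityMeasure : ∀ x, IsProbabilityMeasure (κ x)
  le : ∀ x, κ x ≤ ((C : ℝ≥0∞) / μ (closedBall 0 δ)) • μ.restrict (closedBall x δ)

namespace IsLocalAverage

section Pointwise

variable {μ : Measure E} {κ : Kernel E E} {δ : ℝ} {C : ℝ≥0}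

theorem measure_closedBall_ne_zero [μ.IsOpenPosMeasure] (hκ : IsLocalAverage μ κ δ C) :
    μ (closedBall 0 δ) ≠ 0 :=
  (measure_closedBall_pos μ _ hκ.radius_pos).ne'

theorem integrable [ProperSpace E] [IsFiniteMeasureOnCompacts μ] [μ.IsOpenPosMeasure]
    (hκ : IsLocalAverage μ κ δ C) {f : E → F} (hf : LocallyIntegrable f μ) (x : E) :
    Integrable f (κ x) := by
  refine Integrable.mono_measure ?_ (hκ.le x)
  exact (hf.integrableOn_isCompact (isCompact_closedBall x δ)).smul_measure
    (ENNReal.div_lt_top ENNReal.coe_ne_top hκ.measure_closedBall_ne_zero).ne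

theorem lintegral_le (hκ : IsLocalAverage μ κ δ C) (x : E) (f : E → ℝ≥0∞) :
    ∫⁻ y, f y ∂κ x ≤ C / μ (closedBall 0 δ) * ∫⁻ y in closedBall x δ, f y ∂μ := by
  grw [hκ.le x]
  rw [lintegral_smul_measure, smul_eq_mul]

theorem absolutelyContinuous (hκ : IsLocalAverage μ κ δ C) (x : E) : κ x ≪ μ :=
  ((Measure.absolutelyContinuous_of_le (hκ.le x)).trans
    Measure.smul_absolutelyContinuous).trans Measure.restrict_le_self.absolutelyContinuous

theorem stronglyMeasurable_integral [NormedSpace ℝ F] (hκ : IsLocalAverage μ κ δ C) {f : E → F}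
    (hf : AEStronglyMeasurable f μ) : StronglyMeasurable fun x => ∫ y, f y ∂κ x := by
  simp_rw [fun x => integral_congr_ae ((hκ.absolutelyContinuous x).ae_eq hf.ae_eq_mk)]
  exact hf.stronglyMeasurable_mk.integral_kernel

theorem enorm_integral_rpow_le [NormedSpace ℝ F] (hκ : IsLocalAverage μ κ δ C) {q : ℝ} (hq : 1 ≤ q)
    {f : E → F} (hf : AEStronglyMeasurable f μ) (x : E) :
    ‖∫ y, f y ∂κ x‖ₑ ^ q ≤ ∫⁻ y, ‖f y‖ₑ ^ q ∂κ x := by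
  have := hκ.isProbabilityMeasure x
  have hq0 : 0 < q := by linarith
  have mono := eLpNorm_le_eLpNorm_of_exponent_le (p := 1) (q := ENNReal.ofReal q)
    (by simpa using hq) (hf.mono_ac (hκ.absolutelyContinuous x))
  rw [eLpNorm_one_eq_lintegral_enorm, eLpNorm_eq_lintegral_rpow_enorm_toReal (by simpa using hq0)
    ENNReal.ofReal_ne_top, ENNReal.toReal_ofReal hq0.le] at mono
  calc ‖∫ y, f y ∂κ x‖ₑ ^ q ≤ ((∫⁻ y, ‖f y‖ₑ ^ q ∂κ x) ^ (1 / q)) ^ q := by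
        gcongr
        exact (enorm_integral_le_lintegral_enorm _).trans mono
    _ = _ := by rw [← ENNReal.rpow_mul, one_div_mul_cancel hq0.ne', ENNReal.rpow_one]

theorem norm_integral_le_of_ae_le [NormedSpace ℝ F] (hκ : IsLocalAverage μ κ δ C) {f : E → F}
    {r : ℝ} (hr : ∀ᵐ y ∂μ, ‖f y‖ ≤ r) (x : E) : ‖∫ y, f y ∂κ x‖ ≤ r := by
  have := hκ.isProbabilityMeasure x
  simpa using norm_integral_le_of_norm_le_const ((hκ.absolutelyContinuous x).ae_le hr)

theorem ae_mem_closedBall [BorelSpace E] (hκ : IsLocalAverage μ κ δ C) (x : E) :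
    ∀ᵐ y ∂κ x, y ∈ closedBall x δ :=
  ((Measure.absolutelyContinuous_of_le (hκ.le x)).trans
    Measure.smul_absolutelyContinuous).ae_le (ae_restrict_mem isClosed_closedBall.measurableSet)

theorem norm_integral_sub_le [NormedSpace ℝ F] [CompleteSpace F] [BorelSpace E]
    (hκ : IsLocalAverage μ κ δ C) {f : E → F} {x : E} (hf : Integrable f (κ x)) {c : F} {r : ℝ}
    (hr : ∀ y ∈ closedBall x δ, ‖f y - c‖ ≤ r) : ‖∫ y, f y ∂κ x - c‖ ≤ r := by
  have := hκ.isProbabilityMeasure x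
  have mean_sub : ∫ y, f y ∂κ x - c = ∫ y, (f y - c) ∂κ x := by
    simp [integral_sub hf (integrable_const _)]
  simpa [mean_sub] using
    norm_integral_le_of_norm_le_const ((hκ.ae_mem_closedBall x).mono fun y hy => hr y hy)

end Pointwise

variable [NormedSpace ℝ E] [FiniteDimensional ℝ E] [BorelSpace E]
  {μ : Measure E} [μ.IsAddHaarMeasure]

section Single

variable {κ : Kernel E E} {δ : ℝ} {C : ℝ≥0}

theorem lintegral_lintegral_le (hκ : IsLocalAverage μ κ δ C) {f : E → ℝ≥0∞}
    (hf : AEMeasurable f μ) :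
    ∫⁻ x, ∫⁻ y, f y ∂κ x ∂μ ≤ C * ∫⁻ y, f y ∂μ := by
  wlog hf_meas : Measurable f generalizing f
  · have := this hf.measurable_mk.aemeasurable hf.measurable_mk
    simpa only [lintegral_congr_ae hf.ae_eq_mk.symm,
      fun x => lintegral_congr_ae ((hκ.absolutelyContinuous x).ae_eq hf.ae_eq_mk.symm)] using this
  set V := μ (closedBall (0 : E) δ)
  let near : Set (E × E) := {z | dist z.2 z.1 ≤ δ}
  have near_meas : MeasurableSet near :=
    (isClosed_le (continuous_snd.dist continuous_fst) continuous_const).measurableSet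
  have ind_meas : Measurable fun z : E × E => near.indicator (fun z => f z.2) z :=
    (hf_meas.comp measurable_snd).indicator near_meas
  calc ∫⁻ x, ∫⁻ y, f y ∂κ x ∂μ
      ≤ ∫⁻ x, C / V * ∫⁻ y, near.indicator (fun z => f z.2) (x, y) ∂μ ∂μ := by
        refine lintegral_mono fun x => (hκ.lintegral_le x f).trans_eq ?_
        rw [← lintegral_indicator isClosed_closedBall.measurableSet]
        rfl
    _ = C / V * ∫⁻ x, ∫⁻ y, near.indicator (fun z => f z.2) (x, y) ∂μ ∂μ :=
        lintegral_const_mul _ ind_meas.lintegral_prod_right'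
    _ = C / V * ∫⁻ y, ∫⁻ x, near.indicator (fun z => f z.2) (x, y) ∂μ ∂μ := by
        rw [lintegral_lintegral_swap ind_meas.aemeasurable]
    _ = C / V * ∫⁻ y, f y * V ∂μ := by
        congr! 3 with y
        have slice : (fun x => near.indicator (fun z => f z.2) (x, y)) =
            (closedBall y δ).indicator fun _ => f y := by
          ext x; simp [near, indicator, mem_closedBall, dist_comm]
        rw [slice, lintegral_indicator isClosed_closedBall.measurableSet, setLIntegral_const,
          Measure.addHaar_closedBall_center μ y]
    _ = C * ∫⁻ y, f y ∂μ := by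
        rw [lintegral_mul_const _ hf_meas, mul_comm (∫⁻ y, f y ∂μ), ← mul_assoc,
          ENNReal.div_mul_cancel hκ.measure_closedBall_ne_zero measure_closedBall_lt_top.ne]

theorem norm_integral_le_of_setLIntegral_le [NormedSpace ℝ F] (hκ : IsLocalAverage μ κ δ C)
    {p : ℝ} (hp : 1 ≤ p) {f : E → F} (hf : AEStronglyMeasurable f μ) {b : ℝ} (hb : 0 ≤ b) {x : E}
    (hfb : ∫⁻ y in closedBall x δ, ‖f y‖ₑ ^ p ∂μ ≤ ENNReal.ofReal b) :
    ‖∫ y, f y ∂κ x‖ ≤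
      (C / μ.real (ball 0 1) * b) ^ (1 / p) * δ ^ (-(Module.finrank ℝ E : ℝ) / p) := by
  have hp0 : 0 < p := by linarith
  have hδ := hκ.radius_pos
  have ball_pos : 0 < μ.real (ball (0 : E) 1) :=
    ENNReal.toReal_pos (measure_ball_pos μ _ one_pos).ne' measure_ball_lt_top.ne
  have closedBall_eq : μ (closedBall (0 : E) δ) =
      ENNReal.ofReal (δ ^ Module.finrank ℝ E * μ.real (ball 0 1)) := by
    rw [← Measure.addHaar_real_closedBall μ 0 hδ.le,
      ofReal_measureReal measure_closedBall_lt_top.ne]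
  have power_bound : ‖∫ y, f y ∂κ x‖ ^ p ≤
      C / (δ ^ Module.finrank ℝ E * μ.real (ball 0 1)) * b := by
    rw [← ENNReal.ofReal_le_ofReal_iff (by positivity), ENNReal.ofReal_mul (by positivity),
      ENNReal.ofReal_div_of_pos (by positivity), ENNReal.ofReal_coe_nnreal, ← closedBall_eq,
      ← ENNReal.ofReal_rpow_of_nonneg (norm_nonneg _) hp0.le, ofReal_norm]
    exact (hκ.enorm_integral_rpow_le hp hf x).trans
      ((hκ.lintegral_le x _).trans (mul_le_mul_right hfb _))
  calc ‖∫ y, f y ∂κ x‖ = (‖∫ y, f y ∂κ x‖ ^ p) ^ (1 / p) := by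
        rw [← Real.rpow_mul (norm_nonneg _), mul_one_div_cancel hp0.ne', Real.rpow_one]
    _ ≤ (C / μ.real (ball 0 1) * b * δ ^ (-(Module.finrank ℝ E : ℝ))) ^ (1 / p) := by
        refine Real.rpow_le_rpow (by positivity) (power_bound.trans_eq ?_) (by positivity)
        rw [Real.rpow_neg hδ.le, Real.rpow_natCast]
        field_simp
    _ = _ := by
        rw [Real.mul_rpow (by positivity) (by positivity), ← Real.rpow_mul hδ.le, mul_one_div]

theorem eLpNorm_integral_le [NormedSpace ℝ F] (hκ : IsLocalAverage μ κ δ C) {p : ℝ≥0∞} (hp1 : 1 ≤ p)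
    (hp : p ≠ ⊤) {f : E → F} (hf : AEStronglyMeasurable f μ) :
    eLpNorm (fun x => ∫ y, f y ∂κ x) p μ ≤ (C : ℝ≥0∞) ^ (1 / p.toReal) * eLpNorm f p μ := by
  have hp0 : p ≠ 0 := (zero_lt_one.trans_le hp1).ne'
  have hq : 1 ≤ p.toReal := by simpa using ENNReal.toReal_mono hp hp1
  rw [eLpNorm_eq_lintegral_rpow_enorm_toReal hp0 hp, eLpNorm_eq_lintegral_rpow_enorm_toReal hp0 hp,
    ← ENNReal.mul_rpow_of_nonneg _ _ (by positivity)]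
  gcongr
  calc ∫⁻ x, ‖∫ y, f y ∂κ x‖ₑ ^ p.toReal ∂μ ≤ ∫⁻ x, ∫⁻ y, ‖f y‖ₑ ^ p.toReal ∂κ x ∂μ :=
        lintegral_mono (hκ.enorm_integral_rpow_le hq hf)
    _ ≤ C * ∫⁻ y, ‖f y‖ₑ ^ p.toReal ∂μ := hκ.lintegral_lintegral_le (hf.enorm.pow_const _)

end Single

variable {κ : ℕ → Kernel E E} {δ : ℕ → ℝ} {C : ℝ≥0} [NormedSpace ℝ F] [CompleteSpace F]

theorem ae_tendsto_integral (hκ : ∀ n, IsLocalAverage μ (κ n) (δ n) C)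
    (hδ : Tendsto δ atTop (𝓝 0)) {f : E → F} (hf : LocallyIntegrable f μ) :
    ∀ᵐ x ∂μ, Tendsto (fun n => ∫ y, f y ∂κ n x) atTop (𝓝 (f x)) := by
  have hδ_pos : Tendsto δ atTop (𝓝[>] 0) :=
    tendsto_nhdsWithin_iff.2 ⟨hδ, Eventually.of_forall fun n => (hκ n).radius_pos⟩
  filter_upwards [(Besicovitch.vitaliFamily μ).ae_tendsto_lintegral_enorm_sub_div hf]
    with x lebesgue_point
  have mean_osc := ENNReal.Tendsto.const_mul (a := C)
    ((lebesgue_point.comp (Besicovitch.tendsto_filterAt μ x)).comp hδ_pos)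
    (Or.inr ENNReal.coe_ne_top)
  rw [mul_zero] at mean_osc
  refine tendsto_iff_edist_tendsto_0.2 (tendsto_of_tendsto_of_tendsto_of_le_of_le
    tendsto_const_nhds mean_osc (fun _ => zero_le) fun n => ?_)
  have := (hκ n).isProbabilityMeasure x
  calc edist (∫ y, f y ∂κ n x) (f x) = ‖∫ y, (f y - f x) ∂κ n x‖ₑ := by
        rw [integral_sub ((hκ n).integrable hf x) (integrable_const _), edist_eq_enorm_sub]
        simp
    _ ≤ ∫⁻ y, ‖f y - f x‖ₑ ∂κ n x := enorm_integral_le_lintegral_enorm _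
    _ ≤ C / μ (closedBall 0 (δ n)) * ∫⁻ y in closedBall x (δ n), ‖f y - f x‖ₑ ∂μ :=
        (hκ n).lintegral_le x _
    _ = _ := by
        rw [← Measure.addHaar_closedBall_center μ x]
        simp only [Function.comp_apply, div_eq_mul_inv]
        ring

theorem tendsto_eLpNorm_integral_sub_of_hasCompactSupport
    (hκ : ∀ n, IsLocalAverage μ (κ n) (δ n) C) (hδ : Tendsto δ atTop (𝓝 0)) {p : ℝ≥0∞}
    (hp : p ≠ ⊤) {f : E → F} (hf : Continuous f) (hfs : HasCompactSupport f) :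
    Tendsto (fun n => eLpNorm (fun x => ∫ y, f y ∂κ n x - f x) p μ) atTop (𝓝 0) := by
  let K := cthickening 1 (tsupport f)
  have hK : IsCompact K := hfs.isCompact.cthickening
  have main_bound : ∀ ε > 0, ∀ᶠ n in atTop, eLpNorm (fun x => ∫ y, f y ∂κ n x - f x) p μ ≤
      ENNReal.ofReal ε * μ K ^ (1 / p.toReal) := by
    intro ε hε
    obtain ⟨η, hη, hfη⟩ := Metric.uniformContinuous_iff.1
      (hfs.uniformContinuous_of_continuous hf) ε hε
    filter_upwards [hδ.eventually (gt_mem_nhds (lt_min hη one_pos))] with n hn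
    have int_f (x : E) : Integrable f (κ n x) :=
      (hκ n).integrable hf.locallyIntegrable x
    refine eLpNorm_sub_le_of_dist_bdd μ hp hK.measurableSet hε.le (fun x => ?_) ?_
      ((subset_tsupport f).trans (self_subset_cthickening _))
    · rw [dist_eq_norm]
      refine (hκ n).norm_integral_sub_le (int_f x) fun y hy => ?_
      rw [← dist_eq_norm]
      exact (hfη ((mem_closedBall.1 hy).trans_lt (hn.trans_le (min_le_left _ _)))).le
    · refine Function.support_subset_iff'.2 fun x hx => norm_le_zero_iff.1 ?_
      rw [← sub_zero (∫ y, f y ∂κ n x)]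
      refine (hκ n).norm_integral_sub_le (int_f x) fun y hy => ?_
      suffices y ∉ tsupport f by simp [image_eq_zero_of_notMem_tsupport this]
      refine fun hy' => hx ?_
      refine mem_cthickening_of_dist_le x y 1 _ hy' ?_
      rw [dist_comm]
      exact (mem_closedBall.1 hy).trans (hn.le.trans (min_le_right _ _))
  have bound_lim : Tendsto (fun ε : ℝ => ENNReal.ofReal ε * μ K ^ (1 / p.toReal)) (𝓝[>] 0)
      (𝓝 0) := by
    have := ENNReal.Tendsto.mul_const (b := μ K ^ (1 / p.toReal))
      (ENNReal.tendsto_ofReal (tendsto_id (α := ℝ) (x := 𝓝 0)))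
      (Or.inr (ENNReal.rpow_ne_top_of_nonneg (by positivity) hK.measure_lt_top.ne))
    simpa using this.mono_left nhdsWithin_le_nhds
  refine ENNReal.tendsto_nhds_zero.2 fun η hη => ?_
  obtain ⟨ε, hεη, hε⟩ := ((ENNReal.tendsto_nhds_zero.1 bound_lim η hη).and
    self_mem_nhdsWithin).exists
  exact (main_bound ε hε).mono fun n hn => hn.trans hεη

theorem tendsto_eLpNorm_integral_sub (hκ : ∀ n, IsLocalAverage μ (κ n) (δ n) C)
    (hδ : Tendsto δ atTop (𝓝 0)) {p : ℝ≥0∞} (hp1 : 1 ≤ p) (hp : p ≠ ⊤) {f : E → F}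
    (hf : MemLp f p μ) :
    Tendsto (fun n => eLpNorm (fun x => ∫ y, f y ∂κ n x - f x) p μ) atTop (𝓝 0) := by
  refine ENNReal.tendsto_nhds_zero.2 fun ε hε => ?_
  set A : ℝ≥0∞ := (C : ℝ≥0∞) ^ (1 / p.toReal) + 1
  have hA : A ≠ ⊤ := by simp [A]
  have hA0 : A ≠ 0 := by simp [A]
  obtain ⟨g, hgs, hfg, hgc, hg⟩ := hf.exists_hasCompactSupport_eLpNorm_sub_le hp
    (ENNReal.div_pos (ENNReal.half_pos hε.ne').ne' hA).ne'
  filter_upwards [ENNReal.tendsto_nhds_zero.1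
    (tendsto_eLpNorm_integral_sub_of_hasCompactSupport hκ hδ hp hgc hgs) (ε / 2)
    (ENNReal.half_pos hε.ne')] with n hn
  have meas {h : E → F} (hh : MemLp h p μ) : AEStronglyMeasurable (fun x => ∫ y, h y ∂κ n x) μ :=
    ((hκ n).stronglyMeasurable_integral hh.1).aestronglyMeasurable
  have hfg_mem : MemLp (f - g) p μ := hf.sub hg
  have split : (fun x => ∫ y, f y ∂κ n x - f x) =
      (fun x => ∫ y, (f - g) y ∂κ n x) - (f - g) + fun x => ∫ y, g y ∂κ n x - g x := by
    ext x
    simp only [Pi.add_apply, Pi.sub_apply]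
    rw [integral_sub ((hκ n).integrable (hf.locallyIntegrable hp1) x)
      ((hκ n).integrable (hg.locallyIntegrable hp1) x)]
    abel
  calc eLpNorm (fun x => ∫ y, f y ∂κ n x - f x) p μ
      ≤ eLpNorm (fun x => ∫ y, (f - g) y ∂κ n x) p μ + eLpNorm (f - g) p μ + ε / 2 := by
        rw [split]
        refine (eLpNorm_add_le ((meas hfg_mem).sub hfg_mem.1) ((meas hg).sub hg.1) hp1).trans ?_
        exact add_le_add (eLpNorm_sub_le (meas hfg_mem) hfg_mem.1 hp1) hn
    _ ≤ A * eLpNorm (f - g) p μ + ε / 2 := by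
        grw [(hκ n).eLpNorm_integral_le hp1 hp hfg_mem.1, add_mul, one_mul]
    _ ≤ A * (ε / 2 / A) + ε / 2 := by gcongr
    _ = ε := by rw [ENNReal.mul_div_cancel hA0 hA, ENNReal.add_halves]

theorem tendsto_setLIntegral_enorm_integral_sub (hκ : ∀ n, IsLocalAverage μ (κ n) (δ n) C)
    (hδ : Tendsto δ atTop (𝓝 0)) {f : E → F} (hf : Integrable f μ) (s : Set E) :
    Tendsto (fun n => ∫⁻ x in s, ‖∫ y, f y ∂κ n x - f x‖ₑ ∂μ) atTop (𝓝 0) := by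
  have := tendsto_eLpNorm_integral_sub hκ hδ le_rfl ENNReal.one_ne_top
    (memLp_one_iff_integrable.2 hf)
  simp only [eLpNorm_one_eq_lintegral_enorm] at this
  exact tendsto_of_tendsto_of_tendsto_of_le_of_le tendsto_const_nhds this (fun _ => zero_le)
    fun _ => setLIntegral_le_lintegral _ _

end IsLocalAverage

end LocalAverages

section ConvexIntegrands

variable {m d : ℕ} {f : Mat m d → ℝ≥0∞}

theorem ConvexENNReal.convexOn_toReal (hf : ConvexENNReal f) (hfin : ∀ ξ, f ξ < ⊤) :
    ConvexOn ℝ univ fun ξ => (f ξ).toReal := by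
  refine ⟨convex_univ, fun ξ _ η _ a b ha hb hab => ?_⟩
  obtain rfl : b = 1 - a := by linarith
  have hξ : ENNReal.ofReal a * f ξ ≠ ⊤ := ENNReal.mul_ne_top ENNReal.ofReal_ne_top (hfin _).ne
  have hη : ENNReal.ofReal (1 - a) * f η ≠ ⊤ :=
    ENNReal.mul_ne_top ENNReal.ofReal_ne_top (hfin _).ne
  have := ENNReal.toReal_mono (ENNReal.add_ne_top.2 ⟨hξ, hη⟩) (hf ξ η a ha (by linarith))
  simpa [ENNReal.toReal_add hξ hη, ENNReal.toReal_ofReal ha, ENNReal.toReal_ofReal hb] using this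

theorem ConvexENNReal.continuous (hf : ConvexENNReal f) (hfin : ∀ ξ, f ξ < ⊤) : Continuous f := by
  have := ENNReal.continuous_ofReal.comp (hf.convexOn_toReal hfin).locallyLipschitz.continuous
  simpa only [Function.comp_def, ENNReal.ofReal_toReal (hfin _).ne] using this

theorem ConvexENNReal.le_add (hf : ConvexENNReal f) {s : ℝ} (hs0 : 0 ≤ s) (hs1 : s < 1)
    (ξ η : Mat m d) : f η ≤ f ξ + f ((1 - s)⁻¹ • (η - s • ξ)) := by
  have hs : 1 - s ≠ 0 := by linarith
  calc f η = f (s • ξ + (1 - s) • (1 - s)⁻¹ • (η - s • ξ)) := by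
        rw [smul_inv_smul₀ hs, add_sub_cancel]
    _ ≤ ENNReal.ofReal s * f ξ + ENNReal.ofReal (1 - s) * f ((1 - s)⁻¹ • (η - s • ξ)) :=
        hf _ _ s hs0 hs1.le
    _ ≤ 1 * f ξ + 1 * f ((1 - s)⁻¹ • (η - s • ξ)) := by
        gcongr
        · exact ENNReal.ofReal_le_one.2 hs1.le
        · exact ENNReal.ofReal_le_one.2 (by linarith)
    _ = _ := by simp only [one_mul]

variable {α : Type*} [MeasurableSpace α] {W : α → Mat m d → ℝ≥0∞}

/-- A finite convex function is bounded on a ball by its values at the vertices of a simplex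
containing the ball. -/
theorem exists_integrable_bound_on_closedBall {μ : Measure α} (hWm : ∀ ξ, AEMeasurable (W · ξ) μ)
    (hWfin : ∀ x ξ, W x ξ < ⊤) (hWint : ∀ ξ, ∫⁻ x, W x ξ ∂μ < ⊤) (R : ℝ) :
    ∃ Γ : α → ℝ≥0∞, AEMeasurable Γ μ ∧ ∫⁻ x, Γ x ∂μ < ⊤ ∧
      ∀ x, ConvexENNReal (W x) → ∀ ξ, ‖ξ‖ ≤ R → W x ξ ≤ Γ x := by
  obtain ⟨b, hb, -⟩ :=
    exists_mem_interior_convexHull_affineBasis (univ_mem : univ ∈ 𝓝 (0 : Mat m d))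
  obtain ⟨r, hr, hrb⟩ :=
    Metric.nhds_basis_closedBall.mem_iff.1 (mem_interior_iff_mem_nhds.1 hb)
  set R' := max R 1
  have hR' : 0 < R' := by positivity
  refine ⟨fun x => ∑ i, W x ((R' / r) • b i), Finset.aemeasurable_fun_sum _ fun i _ => hWm _, ?_,
    fun x hx ξ hξ => ?_⟩
  · rw [lintegral_finsetSum' _ fun i _ => hWm _]
    exact ENNReal.sum_lt_top.2 fun i _ => hWint _
  have scaled_convex : ConvexOn ℝ univ fun η => (W x ((R' / r) • η)).toReal :=
    (hx.convexOn_toReal (hWfin x)).comp_linearMap (LinearMap.lsmul ℝ (Mat m d) (R' / r))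
  have scaled_mem : (r / R') • ξ ∈ convexHull ℝ (range b) := by
    refine hrb (mem_closedBall_zero_iff.2 ?_)
    calc ‖(r / R') • ξ‖ = r / R' * ‖ξ‖ := by rw [norm_smul, Real.norm_of_nonneg (by positivity)]
      _ ≤ r / R' * R' := by gcongr; exact hξ.trans (le_max_left _ _)
      _ = r := by field_simp
  obtain ⟨_, ⟨i, rfl⟩, hi⟩ := (scaled_convex.subset (subset_univ _)
    (convex_convexHull ℝ _)).exists_ge_of_mem_convexHull (subset_convexHull ℝ _) scaled_mem
  rw [ENNReal.toReal_le_toReal (hWfin _ _).ne (hWfin _ _).ne, smul_smul,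
    div_mul_div_cancel₀ hr.ne', div_self hR'.ne', one_smul] at hi
  exact hi.trans (Finset.single_le_sum (f := fun i => W x ((R' / r) • b i))
    (fun _ _ => zero_le) (Finset.mem_univ i))

theorem ae_restrict_essInf_closedBall_le {X : Type*} [PseudoMetricSpace X]
    [SecondCountableTopology X] [MeasurableSpace X] [OpensMeasurableSpace X] (ν : Measure X)
    (f : X → ℝ≥0∞) :
    ∀ᵐ x ∂ν, ∀ δ : ℝ, 0 < δ → essInf f (ν.restrict (closedBall x δ)) ≤ f x := by
  have basis := TopologicalSpace.isBasis_countableBasis X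
  have on_basis : ∀ᵐ x ∂ν, ∀ U ∈ TopologicalSpace.countableBasis X, x ∈ U →
      essInf f (ν.restrict U) ≤ f x :=
    (ae_ball_iff (TopologicalSpace.countable_countableBasis X)).2 fun U hU =>
      (ae_restrict_iff' (basis.isOpen hU).measurableSet).1 ae_essInf_le
  filter_upwards [on_basis] with x hx δ hδ
  obtain ⟨U, hU, hxU, hUδ⟩ := basis.mem_nhds_iff.1 (closedBall_mem_nhds x hδ)
  exact (essInf_antitone_measure (Measure.restrict_mono hUδ le_rfl).absolutelyContinuous).trans
    (hx U hU hxU)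

theorem ae_affine_le_of_le_essInf {ν : Measure α} (hWc : ∀ᵐ y ∂ν, Continuous (W y))
    {L : Mat m d →ₗ[ℝ] ℝ} {c : ℝ}
    (hLc : ∀ η, ENNReal.ofReal (L η + c) ≤ essInf (fun y => W y η) ν) :
    ∀ᵐ y ∂ν, ∀ η, ENNReal.ofReal (L η + c) ≤ W y η := by
  have on_dense : ∀ᵐ y ∂ν, ∀ i, ENNReal.ofReal (L (TopologicalSpace.denseSeq _ i) + c) ≤
      W y (TopologicalSpace.denseSeq _ i) :=
    ae_all_iff.2 fun i => Eventually.mono ae_essInf_le fun y hy => (hLc _).trans hy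
  filter_upwards [on_dense, hWc] with y hy hWy η
  refine (TopologicalSpace.denseRange_denseSeq _).induction_on η ?_ hy
  exact isClosed_le (ENNReal.continuous_ofReal.comp
    (L.continuous_of_finiteDimensional.add continuous_const)) hWy

theorem ofReal_integral_le_lintegral_ofReal {κ : Measure α} {g : α → ℝ} (hg : Integrable g κ) :
    ENNReal.ofReal (∫ y, g y ∂κ) ≤ ∫⁻ y, ENNReal.ofReal (g y) ∂κ := by
  refine ENNReal.ofReal_le_of_le_toReal ?_
  rw [integral_eq_lintegral_pos_part_sub_lintegral_neg_part hg]
  exact sub_le_self _ ENNReal.toReal_nonneg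

/-- Jensen's inequality for the affine minorants defining the biconjugate; where the field is
extended by zero, a minorant is at most its value at `0`, hence the last summand. -/
theorem biconj_essInf_integral_le {κ ν : Measure α} [IsProbabilityMeasure κ] {Ω : Set α}
    (hΩ : MeasurableSet Ω) (hκ : κ.restrict Ω ≪ ν) (hWc : ∀ᵐ y ∂ν, Continuous (W y))
    {Y : α → Mat m d} (hY : Integrable (Ω.indicator Y) κ) :
    biconj (fun η => essInf (fun y => W y η) ν) (∫ y, Ω.indicator Y y ∂κ) ≤
      ∫⁻ y, Ω.indicator (fun y => W y (Y y)) y ∂κ + essInf (fun y => W y 0) ν := by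
  refine iSup_le fun L => iSup_le fun c => iSup_le fun hLc => ?_
  set a := essInf (fun y => W y 0) ν
  have minorant : ∀ᵐ y ∂κ, y ∈ Ω → ∀ η, ENNReal.ofReal (L η + c) ≤ W y η :=
    (ae_restrict_iff' hΩ).1 (hκ.ae_le (ae_affine_le_of_le_essInf hWc hLc))
  let L' := LinearMap.toContinuousLinearMap L
  have hLY : Integrable (fun y => L (Ω.indicator Y y)) κ := L'.integrable_comp hY
  have affine_mean : L (∫ y, Ω.indicator Y y ∂κ) + c = ∫ y, (L (Ω.indicator Y y) + c) ∂κ := by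
    rw [integral_add hLY (integrable_const _), integral_const, probReal_univ, one_smul]
    exact congrArg (· + c) (L'.integral_comp_comm hY).symm
  calc ENNReal.ofReal (L (∫ y, Ω.indicator Y y ∂κ) + c)
      ≤ ∫⁻ y, ENNReal.ofReal (L (Ω.indicator Y y) + c) ∂κ := by
        rw [affine_mean]
        exact ofReal_integral_le_lintegral_ofReal (hLY.add (integrable_const c))
    _ ≤ ∫⁻ y, (Ω.indicator (fun y => W y (Y y)) y + a) ∂κ := by
        refine lintegral_mono_ae ?_
        filter_upwards [minorant] with y hy
        by_cases hyΩ : y ∈ Ω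
        · simpa only [indicator_of_mem hyΩ] using (hy hyΩ _).trans le_self_add
        · simpa only [indicator_of_notMem hyΩ, map_zero, zero_add] using hLc 0
    _ = _ := by rw [lintegral_add_right _ measurable_const]; simp

theorem frobNorm_le_mul_norm (ξ : Mat m d) : frobNorm ξ ≤ √(m * d) * ‖ξ‖ := by
  refine Real.sqrt_le_iff.2 ⟨by positivity, ?_⟩
  have entry_le (i j) : ξ i j ^ 2 ≤ ‖ξ‖ ^ 2 :=
    sq_le_sq' (neg_le_of_abs_le ((norm_le_pi_norm (ξ i) j).trans (norm_le_pi_norm ξ i)))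
      (le_of_abs_le ((norm_le_pi_norm (ξ i) j).trans (norm_le_pi_norm ξ i)))
  calc ∑ i, ∑ j, ξ i j ^ 2 ≤ ∑ _i : Fin m, ∑ _j : Fin d, ‖ξ‖ ^ 2 :=
        Finset.sum_le_sum fun i _ => Finset.sum_le_sum fun j _ => entry_le i j
    _ = (√(m * d) * ‖ξ‖) ^ 2 := by
        rw [mul_pow, Real.sq_sqrt (by positivity)]
        simp [mul_assoc]

end ConvexIntegrands

section Energy

open ProbabilityTheory (Kernel)

variable {m d : ℕ} {Ω : Set (Euc d)} {p : ℝ} {W : Euc d → Mat m d → ℝ≥0∞}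

/-- The integrands for which energies pass to the limit along local averages: finite, convex,
integrable at every fixed matrix, and stable in the sense of (a4). -/
structure IsStableIntegrand (Ω : Set (Euc d)) (p : ℝ) (W : Euc d → Mat m d → ℝ≥0∞) : Prop where
  measurable : Measurable (Function.uncurry W)
  lt_top : ∀ x ξ, W x ξ < ⊤
  ae_convex : ∀ᵐ x ∂volume.restrict Ω, ConvexENNReal (W x)
  stable : StabilityEstimate Ω p W
  lintegral_lt_top : ∀ ξ, ∫⁻ x in Ω, W x ξ < ⊤

namespace IsStableIntegrand

theorem ae_continuous (hW : IsStableIntegrand Ω p W) :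
    ∀ᵐ x ∂volume.restrict Ω, Continuous (W x) :=
  hW.ae_convex.mono fun x hx => hx.continuous (hW.lt_top x)

theorem measurable_apply (hW : IsStableIntegrand Ω p W) (ξ : Mat m d) : Measurable (W · ξ) :=
  hW.measurable.comp (measurable_id.prodMk measurable_const)

theorem aemeasurable_comp (hW : IsStableIntegrand Ω p W) {μ : Measure (Euc d)} {X : Euc d → Mat m d}
    (hX : AEMeasurable X μ) : AEMeasurable (fun x => W x (X x)) μ :=
  hW.measurable.comp_aemeasurable (aemeasurable_id.prodMk hX)

end IsStableIntegrand

theorem exists_frobNorm_average_le (hp : 1 ≤ p) {Y : Euc d → Mat m d}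
    (hY : MemLp Y (ENNReal.ofReal p)) (C : ℝ≥0) :
    ∃ M : ℝ, 1 < M ∧ ∀ (κ : Kernel (Euc d) (Euc d)) (δ : ℝ), IsLocalAverage volume κ δ C →
      ∀ x, frobNorm (∫ y, Y y ∂κ x) ≤ M * δ ^ (-(d : ℝ) / p) := by
  have hp0 : 0 < p := by linarith
  have energy_lt_top : ∫⁻ y, ‖Y y‖ₑ ^ p < ⊤ := by
    have := lintegral_rpow_enorm_lt_top_of_eLpNorm_lt_top (by simpa using hp0)
      ENNReal.ofReal_ne_top hY.2
    rwa [ENNReal.toReal_ofReal hp0.le] at this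
  set A := ((C : ℝ) / volume.real (ball (0 : Euc d) 1) * (∫⁻ y, ‖Y y‖ₑ ^ p).toReal) ^ (1 / p)
  refine ⟨√(m * d) * A + 2, by linarith [show 0 ≤ √(m * d : ℝ) * A by positivity],
    fun κ δ hκ x => ?_⟩
  have hA := hκ.norm_integral_le_of_setLIntegral_le hp hY.1 ENNReal.toReal_nonneg (x := x)
    (by rw [ENNReal.ofReal_toReal energy_lt_top.ne]; exact setLIntegral_le_lintegral _ _)
  rw [finrank_euclideanSpace_fin] at hA
  calc frobNorm (∫ y, Y y ∂κ x) ≤ √(m * d) * ‖∫ y, Y y ∂κ x‖ := frobNorm_le_mul_norm _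
    _ ≤ √(m * d) * (A * δ ^ (-(d : ℝ) / p)) := by gcongr
    _ = √(m * d) * A * δ ^ (-(d : ℝ) / p) := by ring
    _ ≤ _ := by gcongr; exacts [Real.rpow_nonneg hκ.radius_pos.le _, by linarith]

/-- The growth restriction in (a4) is exactly what averages of an `L^p` field at scale `δ` satisfy,
so the estimate turns into a bound by averages of the energy density. -/
theorem StabilityEstimate.exists_average_le (hst : StabilityEstimate Ω p W) (hp : 1 ≤ p)
    (hΩ : MeasurableSet Ω) (hWc : ∀ᵐ x ∂volume.restrict Ω, Continuous (W x))
    {Y : Euc d → Mat m d} (hY : MemLp Y (ENNReal.ofReal p) (volume.restrict Ω)) (C : ℝ≥0) :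
    ∃ (A : ℝ≥0) (δ₀ : ℝ) (α : Euc d → ℝ≥0∞), 0 < δ₀ ∧ ∫⁻ x in Ω, α x < ⊤ ∧
      ∀ (κ : Kernel (Euc d) (Euc d)) (δ : ℝ), IsLocalAverage volume κ δ C → δ < δ₀ →
        ∀ᵐ x ∂volume.restrict Ω, W x (∫ y, Ω.indicator Y y ∂κ x) ≤
          A * (∫⁻ y, Ω.indicator (fun y => W y (Y y)) y ∂κ x + W x 0) + α x := by
  have hYΩ : MemLp (Ω.indicator Y) (ENNReal.ofReal p) := (memLp_indicator_iff_restrict hΩ).2 hY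
  obtain ⟨M, hM, hYM⟩ := exists_frobNorm_average_le hp hYΩ C
  obtain ⟨A, δ₀, α, -, hδ₀, hα, hstab⟩ := hst M hM
  refine ⟨A.toNNReal, δ₀, α, hδ₀, hα, fun κ δ hκ hδ => ?_⟩
  filter_upwards [ae_restrict_essInf_closedBall_le (volume.restrict Ω) (W · 0), ae_restrict_mem hΩ]
    with x hx hxΩ
  have := hκ.isProbabilityMeasure x
  have restrict_eq := Measure.restrict_restrict (μ := volume) (t := Ω)
    (isClosed_closedBall (x := x) (ε := δ)).measurableSet
  have hκΩ : (κ x).restrict Ω ≪ volume.restrict (closedBall x δ ∩ Ω) := by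
    rw [inter_comm, ← Measure.restrict_restrict hΩ]
    exact ((Measure.absolutelyContinuous_of_le (hκ.le x)).trans
      Measure.smul_absolutelyContinuous).restrict Ω
  refine (hstab δ hκ.radius_pos hδ x hxΩ _ (hYM κ δ hκ x)).trans ?_
  gcongr
  · exact le_rfl
  grw [biconj_essInf_integral_le hΩ hκΩ
    (ae_mono (Measure.restrict_mono inter_subset_right le_rfl) hWc)
    (hκ.integrable (hYΩ.locallyIntegrable (by simpa using hp)) x), ← hx δ hκ.radius_pos,
    restrict_eq]

theorem IsLocalAverage.lintegral_indicator_le {κ : Kernel (Euc d) (Euc d)} {δ : ℝ} {C : ℝ≥0}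
    (hκ : IsLocalAverage volume κ δ C) {F : Euc d → ℝ≥0∞} (hF : ∀ x, F x ≠ ⊤)
    (hF_loc : LocallyIntegrable (Ω.indicator fun y => (F y).toReal)) {x : Euc d} (hx : x ∈ Ω) :
    ∫⁻ y, Ω.indicator F y ∂κ x ≤ F x + ‖∫ y, Ω.indicator (fun y => (F y).toReal) y ∂κ x -
      Ω.indicator (fun y => (F y).toReal) x‖ₑ := by
  set f : Euc d → ℝ := Ω.indicator fun y => (F y).toReal with hf
  have ofReal_f (y) : Ω.indicator F y = ENNReal.ofReal (f y) := by
    by_cases hy : y ∈ Ω <;> simp [hf, hy, hF]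
  have f_nonneg (y) : 0 ≤ f y := indicator_nonneg (fun _ _ => ENNReal.toReal_nonneg) y
  calc ∫⁻ y, Ω.indicator F y ∂κ x = ENNReal.ofReal (∫ y, f y ∂κ x) := by
        simp_rw [ofReal_f]
        exact (ofReal_integral_eq_lintegral_ofReal (hκ.integrable hF_loc x)
          (Eventually.of_forall f_nonneg)).symm
    _ = ENNReal.ofReal (f x + (∫ y, f y ∂κ x - f x)) := by rw [add_sub_cancel]
    _ ≤ ENNReal.ofReal (f x) + ‖∫ y, f y ∂κ x - f x‖ₑ :=
      ENNReal.ofReal_add_le.trans (by gcongr; exact Real.ofReal_le_enorm _)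
    _ = _ := by rw [← ofReal_f, indicator_of_mem hx]

theorem exists_ae_norm_indicator_le (hΩ : MeasurableSet Ω) {A : Euc d → Mat m d}
    (hA : MemLp A ⊤ (volume.restrict Ω)) : ∃ r : ℝ, ∀ᵐ x, ‖Ω.indicator A x‖ ≤ r := by
  have hA' := (memLp_indicator_iff_restrict hΩ).2 hA
  refine ⟨(eLpNorm (Ω.indicator A) ⊤ volume).toReal, ?_⟩
  filter_upwards [ae_le_eLpNormEssSup (f := Ω.indicator A) (μ := volume)] with x hx
  rw [← toReal_enorm]
  exact ENNReal.toReal_mono hA'.2.ne (by rwa [eLpNorm_exponent_top])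

theorem norm_convex_remainder_le {E : Type*} [NormedAddCommGroup E] [NormedSpace ℝ E] {s r : ℝ}
    (hs0 : 0 ≤ s) (hs1 : s < 1) {a b j v : E} (ha : ‖a‖ ≤ r) (hb : ‖b‖ ≤ r) (hj : ‖j - v‖ ≤ 1) :
    ‖(1 - s)⁻¹ • (a + s • j - s • (b + v))‖ ≤ (1 - s)⁻¹ * (2 * r + 1) := by
  have : 0 < 1 - s := sub_pos.2 hs1
  rw [norm_smul, Real.norm_of_nonneg (by positivity)]
  gcongr
  calc ‖a + s • j - s • (b + v)‖ = ‖a - s • b + s • (j - v)‖ := by congr 1; module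
    _ ≤ ‖a‖ + s * ‖b‖ + s * ‖j - v‖ := by
      rw [← Real.norm_of_nonneg hs0, ← norm_smul, ← norm_smul, Real.norm_of_nonneg hs0]
      exact norm_add_le_of_le (norm_sub_le _ _) le_rfl
    _ ≤ r + 1 * r + 1 * 1 := by gcongr
    _ = 2 * r + 1 := by ring

/-- By convexity `W x (A + s • J)` is at most `W x` of the averaged `A + V` plus `W x` of a bounded
matrix. -/
theorem IsStableIntegrand.exists_energy_density_bound
    (hΩ : MeasurableSet Ω) (hΩb : Bornology.IsBounded Ω) (hp : 1 ≤ p)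
    (hW : IsStableIntegrand Ω p W) {A V : Euc d → Mat m d}
    (hA : MemLp A ⊤ (volume.restrict Ω)) (hV : MemLp V (ENNReal.ofReal p) (volume.restrict Ω))
    (hE : ∫⁻ x in Ω, W x (A x + V x) ≠ ⊤) {s : ℝ} (hs0 : 0 ≤ s) (hs1 : s < 1) (C : ℝ≥0) :
    ∃ (c : ℝ≥0) (δ₀ : ℝ) (H : Euc d → ℝ≥0∞), 0 < δ₀ ∧ ∫⁻ x in Ω, H x ≠ ⊤ ∧
      ∀ (κ : Kernel (Euc d) (Euc d)) (δ : ℝ), IsLocalAverage volume κ δ C → δ < δ₀ →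
        ∀ J : Euc d → Mat m d, (∀ x ∈ Ω, ‖J x - ∫ y, Ω.indicator V y ∂κ x‖ ≤ 1) →
          ∀ᵐ x ∂volume.restrict Ω, W x (A x + s • J x) ≤ H x +
            c * ‖∫ y, Ω.indicator (fun y => (W y (A y + V y)).toReal) y ∂κ x -
              Ω.indicator (fun y => (W y (A y + V y)).toReal) x‖ₑ := by
  have : IsFiniteMeasure (volume.restrict Ω) := isFiniteMeasure_restrict.2 hΩb.measure_lt_top.ne
  have hAp : MemLp A (ENNReal.ofReal p) (volume.restrict Ω) := hA.mono_exponent le_top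
  have hA_loc : LocallyIntegrable (Ω.indicator A) :=
    ((integrable_indicator_iff hΩ).2 (hA.integrable le_top)).locallyIntegrable
  have hV_loc : LocallyIntegrable (Ω.indicator V) :=
    ((integrable_indicator_iff hΩ).2 (hV.integrable (by simpa using hp))).locallyIntegrable
  set F : Euc d → ℝ≥0∞ := fun y => W y (A y + V y)
  have hF : AEMeasurable F (volume.restrict Ω) := hW.aemeasurable_comp (hAp.add hV).1.aemeasurable
  have hF_loc : LocallyIntegrable (Ω.indicator fun y => (F y).toReal) :=
    ((integrable_indicator_iff hΩ).2
      (integrable_toReal_of_lintegral_ne_top hF hE)).locallyIntegrable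
  obtain ⟨r, hr⟩ := exists_ae_norm_indicator_le hΩ hA
  obtain ⟨c, δ₀, α, hδ₀, hα, h_avg⟩ := hW.stable.exists_average_le
    (Y := fun y => A y + V y) hp hΩ hW.ae_continuous (hAp.add hV) C
  obtain ⟨Γ, hΓm, hΓ, hΓ_le⟩ := exists_integrable_bound_on_closedBall
    (fun ξ => (hW.measurable_apply ξ).aemeasurable) hW.lt_top hW.lintegral_lt_top
    ((1 - s)⁻¹ * (2 * r + 1))
  refine ⟨c, δ₀, fun x => c * (F x + W x 0) + α x + Γ x, hδ₀, ?_, fun κ δ hκ hδ J hJ => ?_⟩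
  · have hF0 : AEMeasurable (fun x => c * (F x + W x 0)) (volume.restrict Ω) :=
      (hF.add (hW.measurable_apply 0).aemeasurable).const_mul _
    rw [lintegral_add_right' _ hΓm, lintegral_add_left' hF0,
      lintegral_const_mul' _ _ ENNReal.coe_ne_top, lintegral_add_left' hF]
    finiteness [hE, hα.ne, hΓ.ne, (hW.lintegral_lt_top 0).ne]
  filter_upwards [h_avg κ δ hκ hδ, ae_restrict_of_ae hr, hW.ae_convex, ae_restrict_mem hΩ]
    with x hx hrx hcx hxΩ
  rw [indicator_of_mem hxΩ] at hrx
  have average_add : ∫ y, Ω.indicator (fun y => A y + V y) y ∂κ x =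
      ∫ y, Ω.indicator A y ∂κ x + ∫ y, Ω.indicator V y ∂κ x := by
    rw [← integral_add (hκ.integrable hA_loc x) (hκ.integrable hV_loc x)]
    simp only [indicator_add]
  calc W x (A x + s • J x) ≤ _ := hcx.le_add hs0 hs1
        (∫ y, Ω.indicator A y ∂κ x + ∫ y, Ω.indicator V y ∂κ x) _
    _ ≤ (c * (F x + ‖_‖ₑ + W x 0) + α x) + Γ x := by
      grw [← average_add, hx, hκ.lintegral_indicator_le (fun y => (hW.lt_top y _).ne) hF_loc hxΩ,
        average_add]
      gcongr
      exact hΓ_le x hcx _ (norm_convex_remainder_le hs0 hs1 hrx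
        (hκ.norm_integral_le_of_ae_le hr x) (hJ x hxΩ))
    _ = _ := by ring

theorem IsStableIntegrand.tendsto_lintegral_add_smul
    (hΩ : MeasurableSet Ω) (hΩb : Bornology.IsBounded Ω) (hp : 1 ≤ p)
    (hW : IsStableIntegrand Ω p W) {A V : Euc d → Mat m d}
    (hA : MemLp A ⊤ (volume.restrict Ω)) (hV : MemLp V (ENNReal.ofReal p) (volume.restrict Ω))
    (hE : ∫⁻ x in Ω, W x (A x + V x) ≠ ⊤) {s : ℝ} (hs0 : 0 ≤ s) (hs1 : s < 1)
    {κ : ℕ → Kernel (Euc d) (Euc d)} {δ : ℕ → ℝ} {C : ℝ≥0}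
    (hκ : ∀ n, IsLocalAverage volume (κ n) (δ n) C) (hδ : Tendsto δ atTop (𝓝 0))
    {J : ℕ → Euc d → Mat m d} (hJm : ∀ n, Measurable (J n))
    (hJ : TendstoUniformlyOn (fun n x => J n x - ∫ y, Ω.indicator V y ∂κ n x) 0 atTop Ω) :
    Tendsto (fun n => ∫⁻ x in Ω, W x (A x + s • J n x)) atTop
      (𝓝 (∫⁻ x in Ω, W x (A x + s • V x))) := by
  have : IsFiniteMeasure (volume.restrict Ω) := isFiniteMeasure_restrict.2 hΩb.measure_lt_top.ne
  have hV_int : Integrable (Ω.indicator V) :=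
    (integrable_indicator_iff hΩ).2 (hV.integrable (by simpa using hp))
  obtain ⟨c, δ₀, H, hδ₀, hH, h_le⟩ :=
    hW.exists_energy_density_bound hΩ hΩb hp hA hV hE hs0 hs1 C
  have hF : AEMeasurable (fun x => W x (A x + V x)) (volume.restrict Ω) :=
    hW.aemeasurable_comp (hA.1.add hV.1).aemeasurable
  set Fr : Euc d → ℝ := Ω.indicator fun y => (W y (A y + V y)).toReal
  have hFr : Integrable Fr :=
    (integrable_indicator_iff hΩ).2 (integrable_toReal_of_lintegral_ne_top hF hE)
  refine tendsto_lintegral_of_le_add (G := H)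
    (e := fun n x => c * ‖∫ y, Fr y ∂κ n x - Fr x‖ₑ) (fun n => ?_) (fun n => ?_) hH ?_ ?_ ?_ ?_
  · exact hW.aemeasurable_comp (hA.1.aemeasurable.add ((hJm n).aemeasurable.const_smul s))
  · exact ((((hκ n).stronglyMeasurable_integral hFr.1).aestronglyMeasurable.sub
      hFr.1).enorm.const_mul _).restrict
  · have := ENNReal.Tendsto.const_mul (a := c)
      (IsLocalAverage.tendsto_setLIntegral_enorm_integral_sub hκ hδ hFr Ω)
      (Or.inr ENNReal.coe_ne_top)
    simpa only [lintegral_const_mul' _ _ ENNReal.coe_ne_top, mul_zero] using this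
  · filter_upwards [ae_restrict_of_ae
      (IsLocalAverage.ae_tendsto_integral hκ hδ hFr.locallyIntegrable)] with x hx
    have := ENNReal.Tendsto.const_mul (a := c) (tendsto_iff_edist_tendsto_0.1 hx)
      (Or.inr ENNReal.coe_ne_top)
    simpa only [edist_eq_enorm_sub, mul_zero] using this
  · filter_upwards [hδ.eventually (gt_mem_nhds hδ₀), Metric.tendstoUniformlyOn_iff.1 hJ 1 one_pos]
      with n hδn hJn
    exact h_le (κ n) (δ n) (hκ n) hδn (J n) fun x hx => by
      simpa [dist_eq_norm, norm_sub_rev] using (hJn x hx).le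
  · filter_upwards [hW.ae_continuous, ae_restrict_mem hΩ,
      ae_restrict_of_ae (IsLocalAverage.ae_tendsto_integral hκ hδ hV_int.locallyIntegrable)]
      with x hcx hxΩ hx
    rw [indicator_of_mem hxΩ] at hx
    have hJx : Tendsto (fun n => J n x) atTop (𝓝 (V x)) := by
      simpa using (hJ.tendsto_at hxΩ).add hx
    exact (hcx.tendsto _).comp ((hJx.const_smul s).const_add (A x))

end Energy

section OutwardField

/-- The exterior cone condition for `Ω` inside `s` with axis `ν` and slope `a`: leaving a point
outside `Ω` along the cone `{t • ν + w : a * ‖w‖ ≤ t}` does not lead into `Ω`. -/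
def HasExteriorCone {E : Type*} [NormedAddCommGroup E] [NormedSpace ℝ E] (Ω s : Set E) (ν : E)
    (a : ℝ) : Prop :=
  ∀ ⦃y w : E⦄ ⦃t : ℝ⦄, y ∈ s \ Ω → y + t • ν + w ∈ s → a * ‖w‖ ≤ t → y + t • ν + w ∉ Ω

theorem hasExteriorCone_of_subgraph {E : Type*} [NormedAddCommGroup E] [InnerProductSpace ℝ E]
    {Ω s : Set E} {ν : E} {L : ℝ≥0} {ψ : E → ℝ} (hν : ‖ν‖ = 1) (hψ : LipschitzWith L ψ)
    (hΩ : ∀ y ∈ s, (y ∈ Ω ↔ ⟪y, ν⟫ < ψ (y - ⟪y, ν⟫ • ν))) :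
    HasExteriorCone Ω s ν (2 * L + 1) := by
  intro y w t hy hy' hw
  have height : ⟪y + t • ν + w, ν⟫ = ⟪y, ν⟫ + t + ⟪w, ν⟫ := by
    simp only [inner_add_left, real_inner_smul_left, real_inner_self_eq_norm_sq, hν]
    ring
  have base : y + t • ν + w - ⟪y + t • ν + w, ν⟫ • ν =
      (y - ⟪y, ν⟫ • ν) + (w - ⟪w, ν⟫ • ν) := by rw [height]; module
  have inner_w_le : |⟪w, ν⟫| ≤ ‖w‖ := by simpa [hν] using abs_real_inner_le_norm w ν
  have norm_base_le : ‖w - ⟪w, ν⟫ • ν‖ ≤ 2 * ‖w‖ := by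
    grw [norm_sub_le, norm_smul, hν, Real.norm_eq_abs, inner_w_le]
    linarith
  have ψ_le : ψ ((y - ⟪y, ν⟫ • ν) + (w - ⟪w, ν⟫ • ν)) ≤ ψ (y - ⟪y, ν⟫ • ν) + L * (2 * ‖w‖) := by
    grw [← norm_base_le]
    have := hψ.dist_le_mul ((y - ⟪y, ν⟫ • ν) + (w - ⟪w, ν⟫ • ν)) (y - ⟪y, ν⟫ • ν)
    rw [dist_self_add_left] at this
    linarith [le_abs_self (ψ ((y - ⟪y, ν⟫ • ν) + (w - ⟪w, ν⟫ • ν)) - ψ (y - ⟪y, ν⟫ • ν)),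
      Real.dist_eq (ψ ((y - ⟪y, ν⟫ • ν) + (w - ⟪w, ν⟫ • ν))) (ψ (y - ⟪y, ν⟫ • ν))]
  have hyΩ := mt (hΩ y hy.1).2 hy.2
  rw [hΩ _ hy', base, height]
  linarith [neg_le_of_abs_le inner_w_le]

theorem HasLipschitzBoundary.exists_hasExteriorCone {d : ℕ} {Ω : Set (Euc d)}
    (hΩ : HasLipschitzBoundary Ω) {x : Euc d} (hx : x ∈ frontier Ω) :
    ∃ (ν : Euc d) (ρ a : ℝ), ‖ν‖ = 1 ∧ 0 < ρ ∧ 0 ≤ a ∧ HasExteriorCone Ω (ball x ρ) ν a := by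
  obtain ⟨ν, ρ, L, ψ, hν, hρ, -, hψ, hsub⟩ := hΩ x hx
  exact ⟨ν, ρ, _, hν, hρ, by positivity, hasExteriorCone_of_subgraph hν hψ hsub⟩

theorem inter_frontier_nonempty_of_isPreconnected {X : Type*} [TopologicalSpace X] {s t : Set X}
    (hs : IsPreconnected s) (ht : (s ∩ t).Nonempty) (htc : (s \ t).Nonempty) :
    (s ∩ frontier t).Nonempty := by
  by_contra h
  have hsub : s ⊆ interior t ∪ interior tᶜ := fun b hb => by
    rw [← compl_frontier_eq_union_interior]
    exact fun hbt => h ⟨b, hb, hbt⟩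
  obtain ⟨y, hys, hyt⟩ := ht
  obtain ⟨z, hzs, hzt⟩ := htc
  obtain ⟨q, -, hq, hqc⟩ := hs _ _ isOpen_interior isOpen_interior hsub
    ⟨y, hys, (hsub hys).resolve_right fun h => interior_subset h hyt⟩
    ⟨z, hzs, (hsub hzs).resolve_left fun h => hzt (interior_subset h)⟩
  exact interior_subset hqc (interior_subset hq)

section Cones

variable {E ι : Type*} [NormedAddCommGroup E] [NormedSpace ℝ E] {Ω s s' : Set E} {ν : ι → E}
  {a c : ι → ℝ} {t : Finset ι}

theorem HasExteriorCone.mono {ν : E} {a : ℝ} (h : HasExteriorCone Ω s ν a) (hs : s' ⊆ s) :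
    HasExteriorCone Ω s' ν a :=
  fun _ _ _ hy hy' hw => h ⟨hs hy.1, hy.2⟩ (hs hy') hw

theorem add_sum_smul_notMem (hcone : ∀ i ∈ t, c i ≠ 0 → HasExteriorCone Ω s (ν i) (a i))
    (hc : ∀ i ∈ t, 0 ≤ c i) {z : E} (hz : z ∉ Ω)
    (hs : ∀ t' ⊆ t, z + ∑ i ∈ t', c i • ν i ∈ s) : z + ∑ i ∈ t, c i • ν i ∉ Ω := by
  classical
  induction t using Finset.induction_on with
  | empty => simpa using hz
  | insert i t hi ih =>
    have ih' := ih (fun j hj => hcone j (Finset.mem_insert_of_mem hj))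
      (fun j hj => hc j (Finset.mem_insert_of_mem hj))
      fun t' ht' => hs t' (ht'.trans (Finset.subset_insert i t))
    have move : z + ∑ j ∈ insert i t, c j • ν j = z + ∑ j ∈ t, c j • ν j + c i • ν i + 0 := by
      rw [Finset.sum_insert hi]; abel
    obtain hci | hci := eq_or_ne (c i) 0
    · simpa [move, hci] using ih'
    · have hs_end := hs _ subset_rfl
      rw [move] at hs_end ⊢
      exact hcone i (Finset.mem_insert_self i t) hci ⟨hs _ (Finset.subset_insert i t), ih'⟩ hs_end
        (by simpa using hc i (Finset.mem_insert_self i t))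

/-- The point `z` outside `Ω` is moved along the axes one at a time; the last move, along a long
axis `ν i`, leaves a whole neighbourhood of the end point inside the cone. -/
theorem disjoint_ball_add_sum_smul (hν : ∀ i ∈ t, ‖ν i‖ ≤ 1) (hc : ∀ i ∈ t, 0 ≤ c i) {x z : E}
    {ε r : ℝ} (hr : ε + ∑ i ∈ t, c i ≤ r) (hz : z ∉ Ω) (hxz : dist x z < ε)
    (hcone : ∀ i ∈ t, c i ≠ 0 → HasExteriorCone Ω (ball x r) (ν i) (a i))
    (hlong : ∀ b ∈ frontier Ω ∩ ball x r, ∃ i ∈ t, c i ≠ 0 ∧ 0 ≤ a i ∧ a i * (2 * ε) ≤ c i) :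
    Disjoint (ball (x + ∑ i ∈ t, c i • ν i) ε) Ω := by
  classical
  have norm_sum_le (t') (ht' : t' ⊆ t) : ‖∑ i ∈ t', c i • ν i‖ ≤ ∑ i ∈ t, c i :=
    calc ‖∑ i ∈ t', c i • ν i‖ ≤ ∑ i ∈ t', c i := norm_sum_le_of_le _ fun i hi => by
          rw [norm_smul, Real.norm_of_nonneg (hc i (ht' hi))]
          exact mul_le_of_le_one_right (hc i (ht' hi)) (hν i (ht' hi))
      _ ≤ ∑ i ∈ t, c i := Finset.sum_le_sum_of_subset_of_nonneg ht' fun i hi _ => hc i hi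
  have walk_mem (t') (ht' : t' ⊆ t) : z + ∑ i ∈ t', c i • ν i ∈ ball x r := by
    have := dist_triangle (z + ∑ i ∈ t', c i • ν i) z x
    rw [dist_self_add_left, dist_comm z x] at this
    exact mem_ball.2 (by linarith [norm_sum_le t' ht'])
  refine disjoint_left.2 fun y hy hyΩ => ?_
  have y_mem : y ∈ ball x r := by
    have := dist_triangle y (x + ∑ i ∈ t, c i • ν i) x
    rw [dist_self_add_left] at this
    exact mem_ball.2 (by linarith [norm_sum_le t subset_rfl, mem_ball.1 hy])
  obtain ⟨b, hb⟩ := inter_frontier_nonempty_of_isPreconnected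
    (convex_ball x r).isPreconnected ⟨y, y_mem, hyΩ⟩
    ⟨z, by simpa using walk_mem ∅ (Finset.empty_subset t), hz⟩
  obtain ⟨i, hi, hci, hai, hlong⟩ := hlong b hb.symm
  have hsub := Finset.erase_subset i t
  have before_last : z + ∑ j ∈ t.erase i, c j • ν j ∉ Ω :=
    add_sum_smul_notMem (fun j hj => hcone j (hsub hj)) (fun j hj => hc j (hsub hj)) hz
      fun t' ht' => walk_mem t' (ht'.trans hsub)
  set w := (x - z) + (y - (x + ∑ j ∈ t, c j • ν j))
  have w_le : ‖w‖ ≤ 2 * ε := by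
    have := norm_add_le (x - z) (y - (x + ∑ j ∈ t, c j • ν j))
    rw [← dist_eq_norm, ← dist_eq_norm] at this
    linarith [mem_ball.1 hy]
  have y_eq : z + ∑ j ∈ t.erase i, c j • ν j + c i • ν i + w = y := by
    simp only [w, ← Finset.sum_erase_add t _ hi]; abel
  refine hcone i hi hci ⟨walk_mem _ hsub, before_last⟩ (w := w) (t := c i) (y_eq ▸ y_mem) ?_
    (y_eq ▸ hyΩ)
  grw [w_le, hlong]

end Cones

/-- A smooth bounded field along which every `ε`-neighbourhood of the complement of `Ω` is pushed
out of `Ω` with a margin of `ε`, even when the field is evaluated at a point `X` merely within the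
fixed distance `r`. -/
structure IsOutwardField {E : Type*} [NormedAddCommGroup E] [NormedSpace ℝ E] (Ω : Set E)
    (N : E → E) (Λ r : ℝ) : Prop where
  contDiff : ContDiff ℝ (⊤ : ℕ∞) N
  radius_pos : 0 < r
  norm_add_one_le : ∀ x, ‖N x‖ + 1 ≤ Λ
  disjoint : ∀ ⦃ε : ℝ⦄, 0 < ε → ε * Λ < r → ∀ ⦃x X z : E⦄, dist X x ≤ r → z ∉ Ω → dist x z < ε →
    Disjoint (ball (x + ε • N X) ε) Ω

theorem exists_finset_hasExteriorCone {d : ℕ} {Ω : Set (Euc d)} (hΩb : Bornology.IsBounded Ω)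
    (hΩ : HasLipschitzBoundary Ω) :
    ∃ (t : Finset (Euc d)) (ν : Euc d → Euc d) (ρ a : Euc d → ℝ), (∀ i, 0 < ρ i) ∧
      (∀ i ∈ t, ‖ν i‖ = 1 ∧ 0 ≤ a i ∧ HasExteriorCone Ω (ball i (ρ i)) (ν i) (a i)) ∧
      frontier Ω ⊆ ⋃ i ∈ t, ball i (ρ i / 4) := by
  have compact_frontier : IsCompact (frontier Ω) :=
    isCompact_of_isClosed_isBounded isClosed_frontier (hΩb.closure.subset frontier_subset_closure)
  have data (i : Euc d) : ∃ (ν : Euc d) (ρ a : ℝ), 0 < ρ ∧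
      (i ∈ frontier Ω → ‖ν‖ = 1 ∧ 0 ≤ a ∧ HasExteriorCone Ω (ball i ρ) ν a) := by
    by_cases hi : i ∈ frontier Ω
    · obtain ⟨ν, ρ, a, hν, hρ, h⟩ := hΩ.exists_hasExteriorCone hi
      exact ⟨ν, ρ, a, hρ, fun _ => ⟨hν, h⟩⟩
    · exact ⟨0, 1, 0, one_pos, fun h => absurd h hi⟩
  choose ν ρ a hρ hcone using data
  obtain ⟨t, ht, hcover⟩ := compact_frontier.elim_nhds_subcover (fun i => ball i (ρ i / 4))
    fun i _ => ball_mem_nhds i (by linarith [hρ i])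
  exact ⟨t, ν, ρ, a, hρ, fun i hi => hcone i (ht i hi), hcover⟩

theorem exists_isOutwardField {d : ℕ} {Ω : Set (Euc d)} (hΩb : Bornology.IsBounded Ω)
    (hΩ : HasLipschitzBoundary Ω) :
    ∃ (N : Euc d → Euc d) (Λ r : ℝ), IsOutwardField Ω N Λ r := by
  obtain ⟨t, ν, ρ, a, hρ, hcone, hcover⟩ := exists_finset_hasExteriorCone hΩb hΩ
  obtain ⟨r, hr, hr0⟩ : ∃ r : ℝ, (∀ i ∈ t, r < ρ i / 8) ∧ 0 < r :=
    (((t.eventually_all).2 fun i _ => nhdsWithin_le_nhds (gt_mem_nhds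
      (show 0 < ρ i / 8 by linarith [hρ i]))).and (self_mem_nhdsWithin (s := Ioi 0))).exists
  set K := 2 * ∑ i ∈ t, a i + 1
  have hK : 0 < K := by linarith [t.sum_nonneg fun i hi => (hcone i hi).2.1]
  have ha_le (i) (hi : i ∈ t) : 2 * a i ≤ K := by
    linarith [t.single_le_sum (fun i hi => (hcone i hi).2.1) hi]
  let η (i : Euc d) : ContDiffBump i :=
    ⟨ρ i / 2, 3 * ρ i / 4, by linarith [hρ i], by linarith [hρ i]⟩
  have sum_le (x) : ∑ i ∈ t, K * η i x ≤ K * t.card := by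
    calc ∑ i ∈ t, K * η i x ≤ ∑ _i ∈ t, K * 1 := by gcongr; exact (η _).le_one
      _ = K * t.card := by simp [mul_comm]
  refine ⟨fun x => ∑ i ∈ t, (K * η i x) • ν i, K * t.card + 1, r, ?_, hr0, fun x => ?_, ?_⟩
  · exact ContDiff.sum fun i _ => (contDiff_const.mul (η i).contDiff).smul contDiff_const
  · grw [← sum_le x]
    gcongr
    refine norm_sum_le_of_le _ fun i hi => ?_
    rw [norm_smul, (hcone i hi).1, mul_one, Real.norm_of_nonneg (mul_nonneg hK.le (η i).nonneg)]
  intro ε hε hεΛ x X z hX hz hxz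
  simp only [Finset.smul_sum, smul_smul]
  refine disjoint_ball_add_sum_smul (a := a) (r := r) (fun i hi => (hcone i hi).1.le)
    (fun i _ => mul_nonneg hε.le (mul_nonneg hK.le (η i).nonneg)) ?_ hz hxz (fun i hi hci => ?_) ?_
  · rw [← Finset.mul_sum]
    nlinarith [sum_le X]
  · refine (hcone i hi).2.2.mono fun q hq => ?_
    have hXi : dist X i < 3 * ρ i / 4 := by
      rw [← mem_ball, ← (η i).support_eq]
      exact right_ne_zero_of_mul (right_ne_zero_of_mul hci)
    have := dist_triangle4 q x X i
    rw [dist_comm x X] at this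
    exact mem_ball.2 (by linarith [mem_ball.1 hq, hr i hi])
  · rintro b ⟨hbΩ, hb⟩
    obtain ⟨i, hi, hbi⟩ := mem_iUnion₂.1 (hcover hbΩ)
    have hη : η i X = 1 := by
      refine (η i).one_of_mem_closedBall (mem_closedBall.2 ?_)
      have := dist_triangle4 X x b i
      rw [dist_comm x b] at this
      linarith [mem_ball.1 hb, mem_ball.1 hbi, hr i hi, show (η i).rIn = ρ i / 2 from rfl]
    refine ⟨i, hi, ?_, (hcone i hi).2.1, ?_⟩ <;> rw [hη]
    · positivity
    · nlinarith [ha_le i hi]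

end OutwardField

section FreezingMaps

/-- The points `x` at which `μ (closedBall x ρ)` grows at most linearly, with slope `c`, over the
radii `ρ ∈ s`. -/
def linearGrowthSet {X : Type*} [PseudoMetricSpace X] [MeasurableSpace X] (μ : Measure X) (c : ℝ)
    (s : Set ℝ) : Set X :=
  {x | ∀ ρ ∈ s, μ (closedBall x ρ) ≤ ENNReal.ofReal (c * ρ)}

theorem linearGrowthSet_subset {X : Type*} [PseudoMetricSpace X] [MeasurableSpace X]
    {μ : Measure X} {c c' : ℝ} {s s' : Set ℝ} (hc : c ≤ c') (hs : s' ⊆ s) (hs0 : s' ⊆ Ici 0) :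
    linearGrowthSet μ c s ⊆ linearGrowthSet μ c' s' := fun _ hx ρ hρ =>
  (hx ρ (hs hρ)).trans
    (ENNReal.ofReal_le_ofReal (mul_le_mul_of_nonneg_right hc (mem_Ici.1 (hs0 hρ))))

theorem thickening_linearGrowthSet_subset {X : Type*} [PseudoMetricSpace X] [MeasurableSpace X]
    {μ : Measure X} {c ε r : ℝ} (hε : 0 < ε) :
    thickening ε (linearGrowthSet μ c (Ioo 0 r)) ⊆
      linearGrowthSet μ (2 * c) (Ico ε (r / 2)) := by
  intro x hx ρ hρ
  obtain ⟨y, hy, hxy⟩ := mem_thickening_iff.1 hx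
  have hball : closedBall x ρ ⊆ closedBall y (2 * ρ) :=
    closedBall_subset_closedBall' (by linarith [hρ.1])
  calc μ (closedBall x ρ) ≤ μ (closedBall y (2 * ρ)) := measure_mono hball
    _ ≤ ENNReal.ofReal (c * (2 * ρ)) := hy _ ⟨by linarith [hρ.1], by linarith [hρ.2]⟩
    _ = ENNReal.ofReal (2 * c * ρ) := by ring_nf

theorem ae_exists_mem_linearGrowthSet (μ : Measure ℝ) [IsFiniteMeasure μ] :
    ∀ᵐ t, ∃ l : ℕ, t ∈ linearGrowthSet μ l (Ioo 0 (1 / ((l : ℝ) + 1))) := by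
  filter_upwards [Besicovitch.ae_tendsto_rnDeriv μ volume,
    Measure.rnDeriv_lt_top μ volume] with t ht hlt
  obtain ⟨q, hdq, -⟩ := ENNReal.lt_iff_exists_nnreal_btwn.1 hlt
  obtain ⟨a, ha : 0 < a, hq⟩ :=
    mem_nhdsGT_iff_exists_Ioo_subset.1 (ht.eventually (gt_mem_nhds hdq))
  obtain ⟨l, hl⟩ := exists_nat_ge (max (2 * (q : ℝ)) (1 / a))
  have hla : 1 / ((l : ℝ) + 1) ≤ a := by
    rw [one_div_le (by positivity) ha]
    linarith [(le_max_right _ _).trans hl]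
  refine ⟨l, fun ρ hρ => ?_⟩
  have hratio : μ (closedBall t ρ) / volume (closedBall t ρ) < q := hq ⟨hρ.1, hρ.2.trans_le hla⟩
  rw [Real.volume_closedBall] at hratio
  calc μ (closedBall t ρ) ≤ q * ENNReal.ofReal (2 * ρ) :=
        (ENNReal.div_le_iff (by simpa using hρ.1) ENNReal.ofReal_ne_top).1 hratio.le
    _ = ENNReal.ofReal (2 * q * ρ) := by
        rw [← ENNReal.ofReal_coe_nnreal, ← ENNReal.ofReal_mul q.coe_nonneg]
        ring_nf
    _ ≤ ENNReal.ofReal (l * ρ) :=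
        ENNReal.ofReal_le_ofReal
          (mul_le_mul_of_nonneg_right ((le_max_left _ _).trans hl) hρ.1.le)

theorem exists_volume_diff_closure_linearGrowthSet_le (μ : Measure ℝ) [IsFiniteMeasure μ] (R : ℝ)
    {τ : ℝ} (hτ : 0 < τ) : ∃ c r : ℝ, 0 < r ∧
      volume.real (Icc (-R) R \ closure (linearGrowthSet μ c (Ioo 0 r))) ≤ τ := by
  set G : ℕ → Set ℝ := fun l => linearGrowthSet μ l (Ioo 0 (1 / ((l : ℝ) + 1)))
  have hG : Monotone G := fun l l' hl =>
    linearGrowthSet_subset (by exact_mod_cast hl) (Ioo_subset_Ioo_right (by gcongr))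
      fun ρ hρ => hρ.1.le
  have hlim : Tendsto (fun l => volume (Icc (-R) R \ closure (G l))) atTop
      (𝓝 (volume (⋂ l, Icc (-R) R \ closure (G l)))) :=
    tendsto_measure_iInter_atTop
      (fun l => (measurableSet_Icc.diff isClosed_closure.measurableSet).nullMeasurableSet)
      (fun l l' hl => sdiff_subset_sdiff_right (closure_mono (hG hl)))
      ⟨0, ((measure_mono sdiff_subset).trans_lt isCompact_Icc.measure_lt_top).ne⟩
  have hnull : volume (⋂ l, Icc (-R) R \ closure (G l)) = 0 := by
    refine measure_mono_null (fun t ht => ?_) (ae_iff.1 (ae_exists_mem_linearGrowthSet μ))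
    rintro ⟨l, hl⟩
    exact (mem_iInter.1 ht l).2 (subset_closure hl)
  rw [hnull] at hlim
  obtain ⟨l, hl⟩ := (hlim.eventually (gt_mem_nhds (ENNReal.ofReal_pos.2 hτ))).exists
  exact ⟨l, 1 / ((l : ℝ) + 1), by positivity, ENNReal.toReal_le_of_le_ofReal hτ.le hl.le⟩

theorem abs_intervalIntegral_sub_le_volume_diff {χ : ℝ → ℝ} {A : Set ℝ} {R t : ℝ}
    (hχ : Continuous χ) (h01 : ∀ s, χ s ∈ Icc 0 1) (hχA : EqOn χ 1 A) (ht : |t| ≤ R) :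
    |(∫ s in (0 : ℝ)..t, χ s) - t| ≤ volume.real (Icc (-R) R \ A) := by
  have hsub : uIoc 0 t ⊆ Icc (-R) R := by
    intro s hs
    have hR := abs_le.1 ht
    rcases mem_uIoc.1 hs with h | h <;> constructor <;> linarith [h.1, h.2]
  have hfin : volume (Icc (-R) R \ A) < ⊤ :=
    (measure_mono sdiff_subset).trans_lt isCompact_Icc.measure_lt_top
  have hrestrict : ∫ s in uIoc 0 t, (χ s - 1) = ∫ s in uIoc 0 t \ A, (χ s - 1) :=
    setIntegral_eq_of_subset_of_forall_sdiff_eq_zero measurableSet_uIoc sdiff_subset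
      fun s hs => by
        have hsA : s ∈ A := by_contra fun h => hs.2 ⟨hs.1, h⟩
        simp [hχA hsA]
  calc |(∫ s in (0 : ℝ)..t, χ s) - t| = ‖∫ s in (0 : ℝ)..t, (χ s - 1)‖ := by
        rw [intervalIntegral.integral_sub (hχ.intervalIntegrable _ _) (by simp)]
        simp
    _ = ‖∫ s in uIoc 0 t \ A, (χ s - 1)‖ := by
        rw [intervalIntegral.norm_intervalIntegral_eq, hrestrict]
    _ ≤ 1 * volume.real (uIoc 0 t \ A) :=
        norm_setIntegral_le_of_norm_le_const
          ((measure_mono (sdiff_subset_sdiff_left hsub)).trans_lt hfin) fun s _ => by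
            rw [Real.norm_eq_abs, abs_le]
            constructor <;> linarith [(h01 s).1, (h01 s).2]
    _ ≤ volume.real (Icc (-R) R \ A) := by
        rw [one_mul]
        exact measureReal_mono (sdiff_subset_sdiff_left hsub) hfin.ne

/-- `T` is a smooth map which is `τ`-close to the identity on the ball of radius `R`, and whose
derivative is a contraction that vanishes wherever `μ` fails to grow at most linearly over the
radii in `s`: the variable is frozen where `μ` is concentrated. -/
structure IsFreezingMap {E : Type*} [NormedAddCommGroup E] [NormedSpace ℝ E] [MeasurableSpace E]
    (μ : Measure E) (c : ℝ) (s : Set ℝ) (R τ : ℝ) (T : E → E) : Prop where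
  contDiff : ContDiff ℝ (⊤ : ℕ∞) T
  norm_sub_le : ∀ ⦃x⦄, ‖x‖ ≤ R → ‖T x - x‖ ≤ τ
  norm_fderiv_le : ∀ x, ‖fderiv ℝ T x‖ ≤ 1
  mem_linearGrowthSet : ∀ ⦃x⦄, fderiv ℝ T x ≠ 0 → x ∈ linearGrowthSet μ c s

theorem exists_isFreezingMap_real (μ : Measure ℝ) [IsFiniteMeasure μ] (R : ℝ) {τ : ℝ}
    (hτ : 0 < τ) : ∃ c r : ℝ, 0 < r ∧
      ∀ ε, 0 < ε → ∃ T : ℝ → ℝ, IsFreezingMap μ c (Ico ε r) R τ T := by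
  obtain ⟨c, r, hr, hvol⟩ := exists_volume_diff_closure_linearGrowthSet_le μ R hτ
  set G := linearGrowthSet μ c (Ioo 0 r)
  refine ⟨2 * c, r / 2, by positivity, fun ε hε => ?_⟩
  obtain ⟨χ, hχ0, hχ1, h01⟩ := exists_contMDiffMap_zero_one_of_isClosed (n := ⊤)
    (modelWithCornersSelf ℝ ℝ) (isOpen_thickening (δ := ε) (E := G)).isClosed_compl
    isClosed_closure
    (disjoint_left.2 fun t ht ht' => ht (closure_subset_thickening hε G ht'))
  have hχs : ContDiff ℝ (⊤ : ℕ∞) χ := contMDiff_iff_contDiff.1 χ.contMDiff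
  have hχc : Continuous χ := hχs.continuous
  have hder : ∀ t, HasDerivAt (fun t => ∫ s in (0 : ℝ)..t, χ s) (χ t) t := fun t =>
    intervalIntegral.integral_hasDerivAt_right (hχc.intervalIntegrable _ _)
      (hχc.stronglyMeasurableAtFilter _ _) hχc.continuousAt
  have hderiv : deriv (fun t => ∫ s in (0 : ℝ)..t, χ s) = χ := funext fun t => (hder t).deriv
  refine ⟨fun t => ∫ s in (0 : ℝ)..t, χ s, ?_, fun t ht => ?_, fun t => ?_, fun t ht => ?_⟩
  · exact contDiff_infty_iff_deriv.2 ⟨fun t => (hder t).differentiableAt, by rwa [hderiv]⟩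
  · exact (abs_intervalIntegral_sub_le_volume_diff hχc h01 hχ1 ht).trans hvol
  · rw [← norm_deriv_eq_norm_fderiv, hderiv, Real.norm_eq_abs, abs_of_nonneg (h01 t).1]
    exact (h01 t).2
  · rw [← norm_ne_zero_iff, ← norm_deriv_eq_norm_fderiv, hderiv, norm_ne_zero_iff] at ht
    exact thickening_linearGrowthSet_subset hε (by_contra fun h => ht (hχ0 h))

variable {d : ℕ}

theorem linearGrowthSet_map_proj_preimage_subset (μ : Measure (Euc d)) (j : Fin d) (c : ℝ)
    (s : Set ℝ) {x : Euc d} (hx : x j ∈ linearGrowthSet (μ.map fun x : Euc d => x j) c s) :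
    x ∈ linearGrowthSet μ c s := fun ρ hρ => by
  have hslab := hx ρ hρ
  rw [Measure.map_apply (by fun_prop) measurableSet_closedBall] at hslab
  refine (measure_mono fun y hy => ?_).trans hslab
  rw [mem_closedBall, dist_eq_norm] at hy
  rw [mem_preimage, mem_closedBall, dist_eq_norm]
  exact (PiLp.norm_apply_le (y - x) j).trans hy

theorem norm_le_norm_of_abs_apply_le {ι : Type*} [Fintype ι] {x y : EuclideanSpace ℝ ι}
    (h : ∀ j, |x j| ≤ |y j|) : ‖x‖ ≤ ‖y‖ := by
  simp only [EuclideanSpace.norm_eq, Real.norm_eq_abs]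
  exact Real.sqrt_le_sqrt
    (Finset.sum_le_sum fun j _ => pow_le_pow_left₀ (abs_nonneg _) (h j) 2)

theorem IsFreezingMap.pi {μ : Measure (Euc d)} {c : ℝ} {s : Set ℝ} {R τ : ℝ} {t : Fin d → ℝ → ℝ}
    (ht : ∀ j, IsFreezingMap (μ.map fun x : Euc d => x j) c s R τ (t j)) :
    IsFreezingMap μ c s R ‖(WithLp.toLp 2 fun _ => τ : Euc d)‖
      fun x => WithLp.toLp 2 fun j => t j (x j) := by
  have hT : ContDiff ℝ (⊤ : ℕ∞) fun x : Euc d => (WithLp.toLp 2 fun j => t j (x j) : Euc d) :=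
    contDiff_euclidean.2 fun j =>
      (ht j).contDiff.comp (EuclideanSpace.proj j : Euc d →L[ℝ] ℝ).contDiff
  have hfderiv : ∀ x v j, fderiv ℝ (fun x : Euc d => (WithLp.toLp 2 fun j => t j (x j) : Euc d)) x
      v j = deriv (t j) (x j) * v j := fun x v j => by
    have hj : HasFDerivAt (fun x : Euc d => t j (x j))
        (deriv (t j) (x j) • (EuclideanSpace.proj j : Euc d →L[ℝ] ℝ)) x :=
      ((ht j).contDiff.differentiable (by simp) (x j)).hasDerivAt.comp_hasFDerivAt x
        (EuclideanSpace.proj j : Euc d →L[ℝ] ℝ).hasFDerivAt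
    have hTj := (EuclideanSpace.proj j : Euc d →L[ℝ] ℝ).hasFDerivAt.comp x
      (hT.differentiable (by simp) x).hasFDerivAt
    exact DFunLike.congr_fun (hTj.unique hj) v
  refine ⟨hT, fun x hx => ?_, fun x => ?_, fun x hx => ?_⟩
  · exact norm_le_norm_of_abs_apply_le fun j =>
      ((ht j).norm_sub_le ((PiLp.norm_apply_le x j).trans hx)).trans (le_abs_self τ)
  · refine ContinuousLinearMap.opNorm_le_bound _ zero_le_one fun v => ?_
    rw [one_mul]
    refine norm_le_norm_of_abs_apply_le fun j => ?_
    rw [hfderiv, abs_mul, ← Real.norm_eq_abs (deriv _ _), norm_deriv_eq_norm_fderiv]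
    exact mul_le_of_le_one_left (abs_nonneg _) ((ht j).norm_fderiv_le _)
  · obtain ⟨v, hv⟩ := DFunLike.ne_iff.1 hx
    obtain ⟨j, hj⟩ : ∃ j, deriv (t j) (x j) * v j ≠ 0 := by
      by_contra! h
      exact hv (PiLp.ext fun j => (hfderiv x v j).trans (h j))
    refine linearGrowthSet_map_proj_preimage_subset μ j c s ((ht j).mem_linearGrowthSet ?_)
    rw [← norm_ne_zero_iff, ← norm_deriv_eq_norm_fderiv, norm_ne_zero_iff]
    exact left_ne_zero_of_mul hj

theorem IsFreezingMap.mono {E : Type*} [NormedAddCommGroup E] [NormedSpace ℝ E]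
    [MeasurableSpace E] {μ : Measure E} {c c' : ℝ} {s s' : Set ℝ} {R τ τ' : ℝ} {T : E → E}
    (hT : IsFreezingMap μ c s R τ T) (hc : c ≤ c') (hs : s' ⊆ s) (hs0 : s' ⊆ Ici 0)
    (hτ : τ ≤ τ') : IsFreezingMap μ c' s' R τ' T where
  contDiff := hT.contDiff
  norm_sub_le _ hx := (hT.norm_sub_le hx).trans hτ
  norm_fderiv_le := hT.norm_fderiv_le
  mem_linearGrowthSet _ hx := linearGrowthSet_subset hc hs hs0 (hT.mem_linearGrowthSet hx)

theorem exists_isFreezingMap (μ : Measure (Euc d)) [IsFiniteMeasure μ] (R : ℝ) {τ : ℝ}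
    (hτ : 0 < τ) : ∃ c r : ℝ, 0 ≤ c ∧ 0 < r ∧
      ∀ ε, 0 < ε → ∃ T : Euc d → Euc d, IsFreezingMap μ c (Ico ε r) R τ T := by
  obtain ⟨σ, hστ, hσ⟩ : ∃ σ : ℝ, ‖(WithLp.toLp 2 fun _ => σ : Euc d)‖ < τ ∧ 0 < σ := by
    have hlim : Tendsto (fun σ : ℝ => ‖(WithLp.toLp 2 fun _ => σ : Euc d)‖) (𝓝[>] 0) (𝓝 0) := by
      have hcont : Continuous fun σ : ℝ => ‖(WithLp.toLp 2 fun _ => σ : Euc d)‖ := by fun_prop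
      refine (hcont.tendsto' 0 0 ?_).mono_left nhdsWithin_le_nhds
      exact norm_eq_zero.2 rfl
    exact ((hlim.eventually (gt_mem_nhds hτ)).and self_mem_nhdsWithin).exists
  choose c r hr hT using fun j : Fin d =>
    exists_isFreezingMap_real (μ.map fun x : Euc d => x j) R hσ
  obtain ⟨c', hc', hc'0⟩ : ∃ c', (∀ j, c j ≤ c') ∧ 0 ≤ c' :=
    ((eventually_all.2 fun j => eventually_ge_atTop (c j)).and (eventually_ge_atTop 0)).exists
  obtain ⟨r', hr', hr'0⟩ : ∃ r', (∀ j, r' ∈ Ioc 0 (r j)) ∧ 0 < r' :=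
    ((eventually_all.2 fun j => Ioc_mem_nhdsGT (hr j)).and self_mem_nhdsWithin).exists
  refine ⟨c', r', hc'0, hr'0, fun ε hε => ?_⟩
  choose t ht using fun j => hT j ε hε
  have ht' : ∀ j, IsFreezingMap (μ.map fun x : Euc d => x j) c' (Ico ε r') R σ (t j) := fun j =>
    (ht j).mono (hc' j) (Ico_subset_Ico_right (hr' j).2) (fun ρ hρ => hε.le.trans hρ.1) le_rfl
  exact ⟨_, (IsFreezingMap.pi ht').mono le_rfl Subset.rfl (fun ρ hρ => hε.le.trans hρ.1) hστ.le⟩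

end FreezingMaps

section Mollification

open ProbabilityTheory (Kernel)

variable {E F : Type*} [NormedAddCommGroup E] [NormedSpace ℝ E] [FiniteDimensional ℝ E]
  [HasContDiffBump E] [MeasurableSpace E] [BorelSpace E] [NormedAddCommGroup F] [NormedSpace ℝ F]
  {μ : Measure E} [μ.IsAddHaarMeasure] {ρ : ContDiffBump (0 : E)}

variable (μ ρ) in
/-- The mollification `ρ ∗ f` of `f` by the bump function `ρ`, normalized to have mass one. -/
def mollify (f : E → F) : E → F :=
  convolution (ρ.normed μ) f (ContinuousLinearMap.lsmul ℝ ℝ) μ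

theorem mollify_apply (f : E → F) (z : E) :
    mollify μ ρ f z = ∫ y, ρ.normed μ (z - y) • f y ∂μ :=
  convolution_lsmul_swap

theorem support_mollify_subset (f : E → F) :
    Function.support (mollify μ ρ f) ⊆ thickening ρ.rOut (Function.support f) := fun z hz => by
  obtain ⟨x, hx, y, hy, rfl⟩ := support_convolution_subset _ hz
  rw [ρ.support_normed_eq, mem_ball_zero_iff] at hx
  exact mem_thickening_iff.2 ⟨y, hy, by simpa using hx⟩

theorem contDiff_mollify {n : ℕ∞} {f : E → F} (hf : ContDiff ℝ n f) (hfc : HasCompactSupport f) :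
    ContDiff ℝ n (mollify μ ρ f) :=
  hfc.contDiff_convolution_right _ ρ.integrable_normed.locallyIntegrable hf

theorem fderiv_mollify {f : E → F} (hf : ContDiff ℝ 1 f) (hfc : HasCompactSupport f) :
    fderiv ℝ (mollify μ ρ f) = mollify μ ρ (fderiv ℝ f) :=
  funext fun z => (hfc.hasFDerivAt_convolution_right (ContinuousLinearMap.lsmul ℝ ℝ)
    ρ.integrable_normed.locallyIntegrable hf z).fderiv

theorem integrable_normed_sub_smul {f : E → F} (hf : Integrable f μ) (z : E) :
    Integrable (fun y => ρ.normed μ (z - y) • f y) μ :=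
  hf.bdd_smul (1 / μ.real (closedBall 0 ρ.rIn))
    (ρ.continuous_normed.comp (continuous_const.sub continuous_id)).aestronglyMeasurable
    (Eventually.of_forall fun y => by
      rw [Real.norm_of_nonneg (ρ.nonneg_normed _)]
      exact ρ.normed_le_div_measure_closedBall_rIn μ _)

theorem enorm_mollify_sub_le {f g : E → F} (hf : Integrable f μ) (hg : Integrable g μ) (z : E) :
    ‖mollify μ ρ f z - mollify μ ρ g z‖ₑ ≤
      ENNReal.ofReal (1 / μ.real (closedBall 0 ρ.rIn)) * eLpNorm (f - g) 1 μ := by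
  rw [mollify_apply, mollify_apply,
    ← integral_sub (integrable_normed_sub_smul hf z) (integrable_normed_sub_smul hg z),
    eLpNorm_one_eq_lintegral_enorm, ← lintegral_const_mul' _ _ ENNReal.ofReal_ne_top]
  refine (enorm_integral_le_lintegral_enorm _).trans (lintegral_mono fun y => ?_)
  rw [← smul_sub, enorm_smul, Real.enorm_of_nonneg (ρ.nonneg_normed _)]
  exact mul_le_mul_left (ENNReal.ofReal_le_ofReal (ρ.normed_le_div_measure_closedBall_rIn μ _)) _

theorem tendstoUniformly_mollify {f : ℕ → E → F} {g : E → F} (hf : ∀ n, Integrable (f n) μ)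
    (hg : Integrable g μ) (hfg : Tendsto (fun n => eLpNorm (f n - g) 1 μ) atTop (𝓝 0)) :
    TendstoUniformly (fun n => mollify μ ρ (f n)) (mollify μ ρ g) atTop := by
  refine EMetric.tendstoUniformly_iff.2 fun γ hγ => ?_
  have hlim := ENNReal.Tendsto.const_mul (a := ENNReal.ofReal (1 / μ.real (closedBall 0 ρ.rIn)))
    hfg (Or.inr ENNReal.ofReal_ne_top)
  rw [mul_zero] at hlim
  filter_upwards [hlim.eventually (gt_mem_nhds hγ)] with n hn z
  rw [edist_comm, edist_eq_enorm_sub]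
  exact (enorm_mollify_sub_le (hf n) hg z).trans_lt hn

variable (μ ρ) in
/-- The Markov kernel whose measure at `x` is the law with density `ρ` centred at `S x`; it turns
evaluation of a mollification along `S` into an average. -/
def bumpKernel (S : E → E) : Kernel E E :=
  Kernel.withDensity (Kernel.const E μ) fun x y => ENNReal.ofReal (ρ.normed μ (S x - y))

theorem bumpKernel_apply {S : E → E} (hS : Measurable S) (x : E) :
    bumpKernel μ ρ S x = μ.withDensity fun y => ENNReal.ofReal (ρ.normed μ (S x - y)) := by
  rw [bumpKernel, Kernel.withDensity_apply, Kernel.const_apply]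
  exact (ρ.continuous_normed.measurable.comp
    ((hS.comp measurable_fst).sub measurable_snd)).ennreal_ofReal

theorem integral_bumpKernel {S : E → E} (hS : Measurable S) (f : E → F) (x : E) :
    ∫ y, f y ∂bumpKernel μ ρ S x = mollify μ ρ f (S x) := by
  have hm : Measurable fun y => ENNReal.ofReal (ρ.normed μ (S x - y)) :=
    (ρ.continuous_normed.measurable.comp (measurable_const.sub measurable_id)).ennreal_ofReal
  rw [bumpKernel_apply hS, integral_withDensity_eq_integral_toReal_smul hm (by simp), mollify_apply]
  simp only [ENNReal.toReal_ofReal (ρ.nonneg_normed _)]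

theorem isProbabilityMeasure_bumpKernel {S : E → E} (hS : Measurable S) (x : E) :
    IsProbabilityMeasure (bumpKernel μ ρ S x) := by
  constructor
  rw [bumpKernel_apply hS, withDensity_apply _ MeasurableSet.univ, Measure.restrict_univ,
    lintegral_sub_left_eq_self fun y => ENNReal.ofReal (ρ.normed μ y),
    ← ofReal_integral_eq_lintegral_ofReal ρ.integrable_normed
      (Eventually.of_forall ρ.nonneg_normed), ρ.integral_normed, ENNReal.ofReal_one]

theorem ofReal_normed_le {K Λ : ℝ≥0} (hΛ : 0 < Λ) (hK : ρ.rOut ≤ K * ρ.rIn) (z : E) :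
    ENNReal.ofReal (ρ.normed μ z) ≤
      ((K * Λ) ^ Module.finrank ℝ E : ℝ≥0) / μ (closedBall 0 (ρ.rOut * Λ)) := by
  have hρ := ρ.rOut_pos
  have hball : 0 < μ.real (ball (0 : E) 1) :=
    ENNReal.toReal_pos (measure_ball_pos μ 0 one_pos).ne' measure_ball_lt_top.ne
  have hscaled : 0 < μ.real (closedBall (0 : E) (ρ.rOut * Λ)) := by
    rw [Measure.addHaar_real_closedBall _ _ (by positivity)]
    positivity
  rw [← ofReal_measureReal measure_closedBall_lt_top.ne, ← ENNReal.ofReal_coe_nnreal,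
    ← ENNReal.ofReal_div_of_pos hscaled]
  refine ENNReal.ofReal_le_ofReal
    ((ρ.normed_le_div_measure_closedBall_rOut μ K hK z).trans_eq ?_)
  rw [Measure.addHaar_real_closedBall _ _ hρ.le,
    Measure.addHaar_real_closedBall _ _ (by positivity)]
  push_cast
  field_simp
  ring

theorem isLocalAverage_bumpKernel {S : E → E} (hS : Measurable S) {K Λ : ℝ≥0} (hΛ : 0 < Λ)
    (hK : ρ.rOut ≤ K * ρ.rIn) (hSx : ∀ x, ‖S x - x‖ + ρ.rOut ≤ ρ.rOut * Λ) :
    IsLocalAverage μ (bumpKernel μ ρ S) (ρ.rOut * Λ) ((K * Λ) ^ Module.finrank ℝ E) where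
  radius_pos := mul_pos ρ.rOut_pos hΛ
  isProbabilityMeasure := isProbabilityMeasure_bumpKernel hS
  le x := by
    rw [bumpKernel_apply hS, ← withDensity_const, ← withDensity_indicator measurableSet_closedBall]
    refine withDensity_mono (Eventually.of_forall fun y => ?_)
    by_cases hy : y ∈ closedBall x (ρ.rOut * Λ)
    · rw [indicator_of_mem hy]
      exact ofReal_normed_le hΛ hK _
    · have hvanish : ρ.normed μ (S x - y) = 0 := by
        rw [← Function.notMem_support, ρ.support_normed_eq, mem_ball_zero_iff, not_lt]
        rw [mem_closedBall, dist_comm, dist_eq_norm, not_le] at hy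
        have := norm_sub_le (S x - y) (S x - x)
        rw [sub_sub_sub_cancel_left] at this
        linarith [hSx x]
      simp [hvanish]

end Mollification

section Approximants

open ProbabilityTheory (Kernel)

section Shift

variable {E F : Type*} [NormedAddCommGroup E] [NormedSpace ℝ E] [NormedAddCommGroup F]
  [NormedSpace ℝ F] {Ω : Set E} {N T : E → E} {ε Λ r : ℝ}

/-- The map `x ↦ x + ε N(T x)`, which moves the points of `Ω` near the boundary out of `Ω` when `N`
is an outward field and `T` is close to the identity. -/
def outwardShift (N T : E → E) (ε : ℝ) (x : E) : E :=
  x + ε • N (T x)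

theorem contDiff_outwardShift {n : WithTop ℕ∞} (hN : ContDiff ℝ n N) (hT : ContDiff ℝ n T) :
    ContDiff ℝ n (outwardShift N T ε) :=
  contDiff_id.add ((hN.comp hT).const_smul ε)

theorem IsOutwardField.norm_outwardShift_sub_add_le (hN : IsOutwardField Ω N Λ r) (hε : 0 ≤ ε)
    (x : E) : ‖outwardShift N T ε x - x‖ + ε ≤ ε * Λ := by
  rw [outwardShift, add_sub_cancel_left, norm_smul, Real.norm_of_nonneg hε]
  linarith [mul_le_mul_of_nonneg_left (hN.norm_add_one_le (T x)) hε]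

theorem fderiv_comp_outwardShift {V : E → F} (hV : Differentiable ℝ V) (hN : Differentiable ℝ N)
    (hT : Differentiable ℝ T) (x : E) :
    fderiv ℝ (V ∘ outwardShift N T ε) x = fderiv ℝ V (outwardShift N T ε x) +
      ε • (fderiv ℝ V (outwardShift N T ε x)).comp ((fderiv ℝ N (T x)).comp (fderiv ℝ T x)) := by
  have hS : HasFDerivAt (outwardShift N T ε)
      (.id ℝ E + ε • (fderiv ℝ N (T x)).comp (fderiv ℝ T x)) x :=
    (hasFDerivAt_id x).add (((hN _).hasFDerivAt.comp x (hT x).hasFDerivAt).const_smul ε)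
  rw [((hV _).hasFDerivAt.comp x hS).fderiv, ContinuousLinearMap.comp_add,
    ContinuousLinearMap.comp_smul, ContinuousLinearMap.comp_id]

theorem norm_fderiv_comp_outwardShift_sub_le {V : E → F} (hV : Differentiable ℝ V)
    (hN : Differentiable ℝ N) (hT : Differentiable ℝ T) (hε : 0 ≤ ε) {x : E} {P : E →L[ℝ] F}
    {γ b D : ℝ} (hP : ‖fderiv ℝ V (outwardShift N T ε x) - P‖ ≤ γ) (hb0 : 0 ≤ b)
    (hb : fderiv ℝ T x ≠ 0 → ‖P‖ ≤ b) (hT1 : ‖fderiv ℝ T x‖ ≤ 1) (hD : ‖fderiv ℝ N (T x)‖ ≤ D) :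
    ‖fderiv ℝ (V ∘ outwardShift N T ε) x - P‖ ≤ γ + ε * ((γ + b) * D) := by
  have hγ : 0 ≤ γ := (norm_nonneg _).trans hP
  have hD0 : 0 ≤ D := (norm_nonneg _).trans hD
  rw [fderiv_comp_outwardShift hV hN hT, add_sub_right_comm]
  refine (norm_add_le _ _).trans (add_le_add hP ?_)
  obtain hx | hx := eq_or_ne (fderiv ℝ T x) 0
  · simp only [hx, ContinuousLinearMap.comp_zero, smul_zero, norm_zero]
    positivity
  have hQ : ‖fderiv ℝ V (outwardShift N T ε x)‖ ≤ γ + b := by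
    linarith [norm_le_norm_add_norm_sub' (fderiv ℝ V (outwardShift N T ε x)) P, hb hx]
  rw [norm_smul, Real.norm_of_nonneg hε]
  gcongr
  refine (ContinuousLinearMap.opNorm_comp_le _ _).trans (mul_le_mul hQ ?_ (norm_nonneg _)
    (by positivity))
  exact (ContinuousLinearMap.opNorm_comp_le _ _).trans
    ((mul_le_of_le_one_right (norm_nonneg _) hT1).trans hD)

theorem IsOutwardField.tsupport_mollify_comp_subset [FiniteDimensional ℝ E] [HasContDiffBump E]
    [MeasurableSpace E] [BorelSpace E] {μ : Measure E} [μ.IsAddHaarMeasure]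
    {ρ : ContDiffBump (0 : E)} (hN : IsOutwardField Ω N Λ r) (hρ : ρ.rOut * Λ < r) {R : ℝ}
    (hΩ : Ω ⊆ closedBall 0 R) (hT : ∀ ⦃x⦄, ‖x‖ ≤ R + r → ‖T x - x‖ ≤ r) {w : E → F}
    (hw : Function.support w ⊆ Ω) :
    tsupport (mollify μ ρ w ∘ outwardShift N T ρ.rOut) ⊆ Ω := by
  have hfar : Function.support (mollify μ ρ w ∘ outwardShift N T ρ.rOut) ⊆
      (thickening ρ.rOut Ωᶜ)ᶜ := by
    intro x hx hx'
    obtain ⟨z, hz, hxz⟩ := mem_thickening_iff.1 hx'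
    obtain ⟨y, hy, hxy⟩ := mem_thickening_iff.1 (support_mollify_subset w hx)
    have hyR : ‖y‖ ≤ R := mem_closedBall_zero_iff.1 (hΩ (hw hy))
    have hxR : ‖x‖ ≤ R + r := by
      have hshift := hN.norm_outwardShift_sub_add_le (T := T) ρ.rOut_pos.le x
      rw [← dist_eq_norm] at hshift
      have := dist_triangle_left x y (outwardShift N T ρ.rOut x)
      linarith [norm_le_norm_add_norm_sub' x y, dist_eq_norm x y]
    refine disjoint_left.1 (hN.disjoint ρ.rOut_pos hρ ?_ hz hxz) (mem_ball'.2 hxy) (hw hy)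
    rw [dist_eq_norm]
    exact hT hxR
  intro x hx
  by_contra hxΩ
  exact closure_minimal hfar isOpen_thickening.isClosed_compl hx
    (self_subset_thickening ρ.rOut_pos _ hxΩ)

end Shift

/-- The chain-rule error is of order `δ · δ^((1 - n) / p)`; this is where `p > n - 1` enters. -/
theorem tendsto_chainRule_error {n p : ℝ} (hp : 0 < p) (hnp : n - 1 < p) {a : ℝ} (ha : 0 ≤ a)
    (D : ℝ) : Tendsto
      (fun δ : ℝ => δ + δ * ((δ + (a * δ) ^ (1 / p) * δ ^ (-n / p)) * D)) (𝓝[>] 0) (𝓝 0) := by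
  have hexp : 0 < 1 + (1 / p + -n / p) := by
    rw [show 1 + (1 / p + -n / p) = (p - (n - 1)) / p by field_simp; ring]
    exact div_pos (by linarith) hp
  have hlim : Tendsto (fun δ : ℝ => δ + (δ * δ + a ^ (1 / p) * δ ^ (1 + (1 / p + -n / p))) * D)
      (𝓝 0) (𝓝 0) := by
    have : ContinuousAt
        (fun δ : ℝ => δ + (δ * δ + a ^ (1 / p) * δ ^ (1 + (1 / p + -n / p))) * D) 0 := by
      have := Real.continuousAt_rpow_const 0 (1 + (1 / p + -n / p)) (Or.inr hexp.le)
      fun_prop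
    simpa only [ContinuousAt, Real.zero_rpow hexp.ne', mul_zero, add_zero, zero_mul] using this
  refine (hlim.mono_left nhdsWithin_le_nhds).congr' ?_
  filter_upwards [self_mem_nhdsWithin] with δ (hδ : 0 < δ)
  rw [Real.mul_rpow ha hδ.le, Real.rpow_add hδ, Real.rpow_add hδ, Real.rpow_one]
  ring

theorem isFiniteMeasure_withDensity_enorm_rpow {α F : Type*} [MeasurableSpace α]
    [NormedAddCommGroup F] {μ : Measure α} {G : α → F} {p : ℝ} (hp : 0 < p)
    (hG : MemLp G (ENNReal.ofReal p) μ) :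
    IsFiniteMeasure (μ.withDensity fun y => ‖G y‖ₑ ^ p) := by
  have := lintegral_rpow_enorm_lt_top_of_eLpNorm_lt_top (by simpa using hp) (by simp) hG.2
  rw [ENNReal.toReal_ofReal hp.le] at this
  exact isFiniteMeasure_withDensity this.ne

theorem exists_mollify_norm_sub_le {E F : Type*} [NormedAddCommGroup E] [NormedSpace ℝ E]
    [FiniteDimensional ℝ E] [HasContDiffBump E] [MeasurableSpace E] [BorelSpace E]
    [NormedAddCommGroup F] [NormedSpace ℝ F] {μ : Measure E} [μ.IsAddHaarMeasure]
    (ρ : ContDiffBump (0 : E)) {w : ℕ → E → F} {v : E → F} {G : E → E →L[ℝ] F}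
    (hw : ∀ k, ContDiff ℝ 1 (w k)) (hwc : ∀ k, HasCompactSupport (w k)) (hv : Integrable v μ)
    (hG : Integrable G μ) (hwv : Tendsto (fun k => eLpNorm (w k - v) 1 μ) atTop (𝓝 0))
    (hwG : Tendsto (fun k => eLpNorm (fderiv ℝ (w k) - G) 1 μ) atTop (𝓝 0)) {γ : ℝ} (hγ : 0 < γ) :
    ∃ k, (∀ z, ‖mollify μ ρ (w k) z - mollify μ ρ v z‖ ≤ γ) ∧
      ∀ z, ‖fderiv ℝ (mollify μ ρ (w k)) z - mollify μ ρ G z‖ ≤ γ := by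
  have hint (k) : Integrable (w k) μ := (hw k).continuous.integrable_of_hasCompactSupport (hwc k)
  have hint' (k) : Integrable (fderiv ℝ (w k)) μ :=
    ((hw k).continuous_fderiv one_ne_zero).integrable_of_hasCompactSupport ((hwc k).fderiv ℝ)
  obtain ⟨k, hk, hk'⟩ := ((Metric.tendstoUniformly_iff.1
    (tendstoUniformly_mollify (ρ := ρ) hint hv hwv) γ hγ).and (Metric.tendstoUniformly_iff.1
    (tendstoUniformly_mollify (ρ := ρ) hint' hG hwG) γ hγ)).exists
  refine ⟨k, fun z => ?_, fun z => ?_⟩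
  · rw [← dist_eq_norm, dist_comm]
    exact (hk z).le
  · rw [fderiv_mollify (hw k) (hwc k), ← dist_eq_norm, dist_comm]
    exact (hk' z).le

theorem exists_isLocalAverage_norm_sub_le {E F : Type*} [NormedAddCommGroup E] [NormedSpace ℝ E]
    [FiniteDimensional ℝ E] [HasContDiffBump E] [MeasurableSpace E] [BorelSpace E]
    [NormedAddCommGroup F] [NormedSpace ℝ F] {μ : Measure E} [μ.IsAddHaarMeasure]
    {Ω : Set E} {N T : E → E} {Λ : ℝ≥0} {r R c p ε γ D : ℝ} {s : Set ℝ} {w : ℕ → E → F}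
    {v : E → F} {G : E → E →L[ℝ] F} (hw : ∀ k, ContDiff ℝ (⊤ : ℕ∞) (w k))
    (hwc : ∀ k, HasCompactSupport (w k)) (hwΩ : ∀ k, Function.support (w k) ⊆ Ω)
    (hv : Integrable v μ) (hG : Integrable G μ)
    (hwv : Tendsto (fun k => eLpNorm (w k - v) 1 μ) atTop (𝓝 0))
    (hwG : Tendsto (fun k => eLpNorm (fderiv ℝ (w k) - G) 1 μ) atTop (𝓝 0)) (hp : 1 ≤ p)
    (hΩ : Ω ⊆ closedBall 0 R) (hN : IsOutwardField Ω N Λ r) (hε : 0 < ε) (hεr : ε * Λ < r)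
    (hT : IsFreezingMap (μ.withDensity fun y => ‖G y‖ₑ ^ p) c s (R + r) r T) (hc : 0 ≤ c)
    (hs : ε * Λ ∈ s) (hD : ∀ X ∈ closedBall 0 (R + r), ‖fderiv ℝ N X‖ ≤ D) (hγ : 0 < γ) :
    ∃ (κ : Kernel E E) (φ : E → F),
      IsLocalAverage μ κ (ε * Λ) ((2 * Λ) ^ Module.finrank ℝ E) ∧
      ContDiff ℝ (⊤ : ℕ∞) φ ∧ tsupport φ ⊆ Ω ∧ (∀ x, ‖φ x - ∫ y, v y ∂κ x‖ ≤ γ) ∧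
      ∀ x ∈ Ω, ‖fderiv ℝ φ x - ∫ y, G y ∂κ x‖ ≤ γ + ε * ((γ +
        (((2 * Λ) ^ Module.finrank ℝ E : ℝ≥0) / μ.real (ball 0 1) * (c * (ε * Λ))) ^ (1 / p) *
          (ε * Λ) ^ (-(Module.finrank ℝ E : ℝ) / p)) * D) := by
  have hΛ : 0 < Λ := by
    exact_mod_cast (by linarith [hN.norm_add_one_le 0, norm_nonneg (N 0)] : (0 : ℝ) < Λ)
  have hS : ContDiff ℝ (⊤ : ℕ∞) (outwardShift N T ε) :=
    contDiff_outwardShift hN.contDiff hT.contDiff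
  let ρ : ContDiffBump (0 : E) := ⟨ε / 2, ε, half_pos hε, half_lt_self hε⟩
  obtain ⟨k, hk, hk'⟩ := exists_mollify_norm_sub_le ρ (fun k => (hw k).of_le (by simp)) hwc hv hG
    hwv hwG hγ
  have hκ : IsLocalAverage μ (bumpKernel μ ρ (outwardShift N T ε)) (ε * Λ) _ :=
    isLocalAverage_bumpKernel hS.continuous.measurable hΛ (K := 2)
      (show ε ≤ 2 * (ε / 2) by linarith) (hN.norm_outwardShift_sub_add_le hε.le)
  have hV : ContDiff ℝ (⊤ : ℕ∞) (mollify μ ρ (w k)) := contDiff_mollify (hw k) (hwc k)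
  refine ⟨_, mollify μ ρ (w k) ∘ outwardShift N T ε, hκ, hV.comp hS,
    hN.tsupport_mollify_comp_subset hεr hΩ hT.norm_sub_le (hwΩ k), fun x => ?_, fun x hx => ?_⟩
  · rw [integral_bumpKernel hS.continuous.measurable]
    exact hk _
  have hxR : ‖x‖ ≤ R := mem_closedBall_zero_iff.1 (hΩ hx)
  refine norm_fderiv_comp_outwardShift_sub_le (hV.differentiable (by simp))
    (hN.contDiff.differentiable (by simp)) (hT.contDiff.differentiable (by simp)) hε.le ?_
    (by positivity) (fun hTx => ?_) (hT.norm_fderiv_le x) (hD _ ?_)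
  · rw [integral_bumpKernel hS.continuous.measurable]
    exact hk' _
  · refine hκ.norm_integral_le_of_setLIntegral_le hp hG.1 (by positivity) ?_
    rw [← withDensity_apply _ measurableSet_closedBall]
    exact hT.mem_linearGrowthSet hTx _ hs
  · rw [mem_closedBall_zero_iff]
    linarith [norm_le_norm_add_norm_sub' (T x) x, hT.norm_sub_le (x := x)
      (by linarith [hN.radius_pos])]

variable {d : ℕ} {F : Type*} [NormedAddCommGroup F] [NormedSpace ℝ F] {Ω : Set (Euc d)} {p : ℝ}

theorem tendsto_eLpNorm_one_sub_indicator {F : Type*} [NormedAddCommGroup F]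
    (hΩ : MeasurableSet Ω) (hΩb : Bornology.IsBounded Ω) (hp : 1 ≤ p) {w : ℕ → Euc d → F}
    {v : Euc d → F} (hw : ∀ k, AEStronglyMeasurable (w k))
    (hwΩ : ∀ k, Function.support (w k) ⊆ Ω)
    (hv : AEStronglyMeasurable v (volume.restrict Ω)) (hwv : Tendsto
      (fun k => eLpNorm (w k - v) (ENNReal.ofReal p) (volume.restrict Ω)) atTop (𝓝 0)) :
    Tendsto (fun k => eLpNorm (w k - Ω.indicator v) 1 volume) atTop (𝓝 0) := by
  have : IsFiniteMeasure (volume.restrict Ω) := isFiniteMeasure_restrict.2 hΩb.measure_lt_top.ne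
  have hp1 : 1 ≤ ENNReal.ofReal p := by simpa using hp
  have hlim := ENNReal.Tendsto.mul_const hwv (b := volume.restrict Ω univ ^
      (1 / (1 : ℝ≥0∞).toReal - 1 / (ENNReal.ofReal p).toReal))
    (Or.inr (ENNReal.rpow_ne_top_of_nonneg (sub_nonneg.2
      (by simpa [ENNReal.toReal_ofReal (zero_le_one.trans hp)] using inv_le_one_of_one_le₀ hp))
      (measure_ne_top _ _)))
  rw [zero_mul] at hlim
  refine tendsto_of_tendsto_of_tendsto_of_le_of_le tendsto_const_nhds hlim (fun _ => zero_le)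
    fun k => ?_
  have hind : w k - Ω.indicator v = Ω.indicator (w k - v) := by
    rw [indicator_sub', indicator_eq_self.2 (hwΩ k)]
  rw [hind, eLpNorm_indicator_eq_eLpNorm_restrict hΩ]
  exact eLpNorm_le_eLpNorm_mul_rpow_measure_univ hp1 ((hw k).restrict.sub hv)

theorem eventually_exists_isLocalAverage_norm_sub_le (hΩb : Bornology.IsBounded Ω)
    (hΩ : HasLipschitzBoundary Ω) (hp : 1 ≤ p) (hpd : (d : ℝ) - 1 < p) {w : ℕ → Euc d → F}
    {v : Euc d → F} {G : Euc d → Euc d →L[ℝ] F} (hw : ∀ k, ContDiff ℝ (⊤ : ℕ∞) (w k))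
    (hwc : ∀ k, HasCompactSupport (w k)) (hwΩ : ∀ k, Function.support (w k) ⊆ Ω)
    (hv : Integrable v) (hG : Integrable G) (hGp : MemLp G (ENNReal.ofReal p))
    (hwv : Tendsto (fun k => eLpNorm (w k - v) 1 volume) atTop (𝓝 0))
    (hwG : Tendsto (fun k => eLpNorm (fderiv ℝ (w k) - G) 1 volume) atTop (𝓝 0)) :
    ∃ (C : ℝ≥0) (β : ℝ → ℝ), Tendsto β (𝓝[>] 0) (𝓝 0) ∧ ∀ᶠ δ in 𝓝[>] 0,
      ∃ (κ : Kernel (Euc d) (Euc d)) (φ : Euc d → F), IsLocalAverage volume κ δ C ∧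
        ContDiff ℝ (⊤ : ℕ∞) φ ∧ tsupport φ ⊆ Ω ∧ (∀ x ∈ Ω, ‖φ x - ∫ y, v y ∂κ x‖ ≤ β δ) ∧
        ∀ x ∈ Ω, ‖fderiv ℝ φ x - ∫ y, G y ∂κ x‖ ≤ β δ := by
  have hp0 : 0 < p := by linarith
  obtain ⟨N, Λ, r, hN⟩ := exists_isOutwardField hΩb hΩ
  obtain ⟨R, hR⟩ := hΩb.subset_closedBall 0
  have hr := hN.radius_pos
  have hΛ : 1 ≤ Λ := by linarith [hN.norm_add_one_le 0, norm_nonneg (N 0)]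
  lift Λ to ℝ≥0 using zero_le_one.trans hΛ
  obtain ⟨D, hD⟩ := (isCompact_closedBall (0 : Euc d) (R + r)).exists_bound_of_continuousOn
    (hN.contDiff.continuous_fderiv (by simp)).continuousOn
  have := isFiniteMeasure_withDensity_enorm_rpow hp0 hGp
  obtain ⟨c, rT, hc, hrT, hT⟩ :=
    exists_isFreezingMap (volume.withDensity fun y => ‖G y‖ₑ ^ p) (R + r) hr
  set C : ℝ≥0 := (2 * Λ) ^ d
  set a : ℝ := C / volume.real (ball (0 : Euc d) 1) * c
  have hδ : Tendsto (fun δ : ℝ => δ) (𝓝[>] 0) (𝓝 0) := nhdsWithin_le_nhds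
  refine ⟨C, _, tendsto_chainRule_error hp0 hpd (a := a) (by positivity) (max D 0), ?_⟩
  filter_upwards [self_mem_nhdsWithin, hδ.eventually_lt_const hr, hδ.eventually_lt_const hrT]
    with δ (hδ0 : 0 < δ) hδr hδT
  have hε : δ / Λ * Λ = δ := div_mul_cancel₀ δ (by positivity)
  have hε0 : 0 < δ / Λ := by positivity
  obtain ⟨T, hT⟩ := hT (δ / Λ) hε0
  obtain ⟨κ, φ, hκ, hφ, hφΩ, hφv, hφG⟩ := exists_isLocalAverage_norm_sub_le hw hwc hwΩ hv hG hwv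
    hwG hp hR hN hε0 (hε.trans_lt hδr) hT hc (by rw [hε]; exact ⟨div_le_self hδ0.le hΛ, hδT⟩)
    (fun X hX => (hD X hX).trans (le_max_left D 0)) hδ0
  simp only [hε, finrank_euclideanSpace_fin, ← mul_assoc _ c δ] at hκ hφG
  refine ⟨κ, φ, hκ, hφ, hφΩ, fun x _ => (hφv x).trans (le_add_of_nonneg_right (by positivity)),
    fun x hx => (hφG x hx).trans ?_⟩
  gcongr
  exact div_le_self hδ0.le hΛ

end Approximants

section Jacobians

open ProbabilityTheory (Kernel)

variable {d m : ℕ} {Ω : Set (Euc d)} {p : ℝ}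

variable (d m) in
/-- The identification of linear maps `ℝ^d → ℝ^m` with their matrices in the standard bases, which
takes the derivative of a map to its Jacobian. -/
def jacobianEquiv : (Euc d →L[ℝ] Euc m) ≃L[ℝ] Mat m d :=
  (LinearMap.toContinuousLinearMap.symm ≪≫ₗ
    LinearMap.toMatrix (EuclideanSpace.basisFun (Fin d) ℝ).toBasis
      (EuclideanSpace.basisFun (Fin m) ℝ).toBasis ≪≫ₗ
    (Matrix.ofLinearEquiv ℝ).symm).toContinuousLinearEquiv

theorem smoothJac_eq (φ : Euc d → Euc m) (x : Euc d) :
    smoothJac φ x = jacobianEquiv d m (fderiv ℝ φ x) := by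
  ext i j
  simp [smoothJac, jacobianEquiv, LinearMap.toMatrix_apply]

theorem continuous_smoothJac {φ : Euc d → Euc m} (hφ : ContDiff ℝ 1 φ) :
    Continuous (smoothJac φ) := by
  simp only [funext (smoothJac_eq φ)]
  exact (jacobianEquiv d m).continuous.comp (hφ.continuous_fderiv one_ne_zero)

theorem IsCcSmooth.continuous_smoothJac {φ : Euc d → Euc m} (hφ : IsCcSmooth Ω φ) :
    Continuous (smoothJac φ) :=
  _root_.continuous_smoothJac (hφ.1.of_le (by simp))

theorem tendsto_eLpNorm_clm_apply {α V V' : Type*} [MeasurableSpace α] [NormedAddCommGroup V]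
    [NormedAddCommGroup V'] [NormedSpace ℝ V] [NormedSpace ℝ V'] {μ : Measure α} {q : ℝ≥0∞}
    (L : V →L[ℝ] V') {f : ℕ → α → V} (hf : Tendsto (fun n => eLpNorm (f n) q μ) atTop (𝓝 0)) :
    Tendsto (fun n => eLpNorm (fun x => L (f n x)) q μ) atTop (𝓝 0) := by
  have hlim := ENNReal.Tendsto.const_mul (a := ENNReal.ofReal ‖L‖) hf (Or.inr ENNReal.ofReal_ne_top)
  rw [mul_zero] at hlim
  exact tendsto_of_tendsto_of_tendsto_of_le_of_le tendsto_const_nhds hlim (fun _ => zero_le)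
    fun n => eLpNorm_le_mul_eLpNorm_of_ae_le_mul (ae_of_all _ fun x => L.le_opNorm _) q

theorem tendstoUniformlyOn_zero_of_norm_le {α V : Type*} [SeminormedAddCommGroup V]
    {f : ℕ → α → V} {s : Set α} {b : ℕ → ℝ} (hb : Tendsto b atTop (𝓝 0))
    (hf : ∀ n, ∀ x ∈ s, ‖f n x‖ ≤ b n) : TendstoUniformlyOn f 0 atTop s := by
  refine SeminormedAddGroup.tendstoUniformlyOn_zero.2 fun ε hε => ?_
  filter_upwards [hb.eventually_lt_const hε] with n hn x hx using (hf n x hx).trans_lt hn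

theorem integrable_memLp_indicator {F : Type*} [NormedAddCommGroup F] (hΩ : MeasurableSet Ω)
    (hΩb : Bornology.IsBounded Ω) {q : ℝ≥0∞} (hq : 1 ≤ q) {f : Euc d → F}
    (hf : MemLp f q (volume.restrict Ω)) :
    Integrable (Ω.indicator f) ∧ MemLp (Ω.indicator f) q := by
  have : IsFiniteMeasure (volume.restrict Ω) := isFiniteMeasure_restrict.2 hΩb.measure_lt_top.ne
  exact ⟨(integrable_indicator_iff hΩ).2 (hf.integrable hq), (memLp_indicator_iff_restrict hΩ).2 hf⟩

theorem exists_seq_isLocalAverage_tendstoUniformlyOn {F V : Type*} [NormedAddCommGroup F]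
    [NormedSpace ℝ F] [NormedAddCommGroup V] [NormedSpace ℝ V] (J : (Euc d →L[ℝ] F) ≃L[ℝ] V)
    (hΩm : MeasurableSet Ω) (hΩb : Bornology.IsBounded Ω) (hΩ : HasLipschitzBoundary Ω)
    (hp : 1 ≤ p) (hpd : (d : ℝ) - 1 < p) {w : ℕ → Euc d → F} {v : Euc d → F} {Dv : Euc d → V}
    (hw : ∀ k, ContDiff ℝ (⊤ : ℕ∞) (w k)) (hwc : ∀ k, HasCompactSupport (w k))
    (hwΩ : ∀ k, tsupport (w k) ⊆ Ω) (hv : MemLp v (ENNReal.ofReal p) (volume.restrict Ω))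
    (hDv : MemLp Dv (ENNReal.ofReal p) (volume.restrict Ω))
    (hwv : Tendsto (fun k => eLpNorm (w k - v) (ENNReal.ofReal p) (volume.restrict Ω))
      atTop (𝓝 0))
    (hwDv : Tendsto (fun k => eLpNorm ((fun x => J (fderiv ℝ (w k) x)) - Dv) (ENNReal.ofReal p)
      (volume.restrict Ω)) atTop (𝓝 0)) :
    ∃ (κ : ℕ → Kernel (Euc d) (Euc d)) (δ : ℕ → ℝ) (C : ℝ≥0) (φ : ℕ → Euc d → F),
      (∀ n, IsLocalAverage volume (κ n) (δ n) C) ∧ Tendsto δ atTop (𝓝 0) ∧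
      (∀ n, ContDiff ℝ (⊤ : ℕ∞) (φ n) ∧ tsupport (φ n) ⊆ Ω) ∧
      TendstoUniformlyOn (fun n x => φ n x - ∫ y, Ω.indicator v y ∂κ n x) 0 atTop Ω ∧
      TendstoUniformlyOn (fun n x => J (fderiv ℝ (φ n) x) - ∫ y, Ω.indicator Dv y ∂κ n x) 0
        atTop Ω := by
  have : IsFiniteMeasure (volume.restrict Ω) := isFiniteMeasure_restrict.2 hΩb.measure_lt_top.ne
  have hp1 : 1 ≤ ENNReal.ofReal p := by simpa using hp
  let G : Euc d → Euc d →L[ℝ] F := fun x => J.symm (Dv x)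
  have hG : MemLp G (ENNReal.ofReal p) (volume.restrict Ω) :=
    J.symm.toContinuousLinearMap.comp_memLp' hDv
  have hwG : Tendsto (fun k => eLpNorm (fderiv ℝ (w k) - G) (ENNReal.ofReal p)
      (volume.restrict Ω)) atTop (𝓝 0) := by
    refine (tendsto_eLpNorm_clm_apply J.symm.toContinuousLinearMap hwDv).congr fun k => ?_
    congr 1 with x : 1
    simp [G]
  obtain ⟨hGi, hGp⟩ := integrable_memLp_indicator hΩm hΩb hp1 hG
  obtain ⟨C, β, hβ, h⟩ := eventually_exists_isLocalAverage_norm_sub_le (v := Ω.indicator v)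
    (G := Ω.indicator G) hΩb hΩ hp hpd hw hwc
    (fun k => (subset_tsupport _).trans (hwΩ k))
    (integrable_memLp_indicator hΩm hΩb hp1 hv).1 hGi hGp
    (tendsto_eLpNorm_one_sub_indicator hΩm hΩb hp
      (fun k => (hw k).continuous.aestronglyMeasurable)
      (fun k => (subset_tsupport _).trans (hwΩ k)) hv.1 hwv)
    (tendsto_eLpNorm_one_sub_indicator hΩm hΩb hp
      (fun k => ((hw k).continuous_fderiv (by simp)).aestronglyMeasurable)
      (fun k => (support_fderiv_subset ℝ).trans (hwΩ k)) hG.1 hwG)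
  obtain ⟨δ, hδ, h⟩ := exists_seq_forall_of_frequently h.frequently
  choose κ φ hκ hφ hφΩ hφv hφG using h
  refine ⟨κ, δ, C, φ, hκ, hδ.mono_right nhdsWithin_le_nhds, fun n => ⟨hφ n, hφΩ n⟩,
    tendstoUniformlyOn_zero_of_norm_le (hβ.comp hδ) hφv, ?_⟩
  have hJ := J.toContinuousLinearMap.uniformContinuous.comp_tendstoUniformlyOn
    (tendstoUniformlyOn_zero_of_norm_le (hβ.comp hδ) hφG)
  have hind : Ω.indicator G = fun y => J.symm (Ω.indicator Dv y) :=
    indicator_comp_of_zero (map_zero J.symm)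
  simpa [hind, J.symm.integral_comp_comm, Function.comp_def, Pi.zero_def] using hJ

theorem MemW1p0.exists_seq_isLocalAverage (hΩm : MeasurableSet Ω) (hΩb : Bornology.IsBounded Ω)
    (hΩ : HasLipschitzBoundary Ω) (hp : 1 ≤ p) (hpd : (d : ℝ) - 1 < p) {v : Euc d → Euc m}
    {Dv : Euc d → Mat m d} (hv : MemW1p0 Ω (ENNReal.ofReal p) v Dv) :
    ∃ (κ : ℕ → Kernel (Euc d) (Euc d)) (δ : ℕ → ℝ) (C : ℝ≥0) (φ : ℕ → Euc d → Euc m),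
      (∀ n, IsLocalAverage volume (κ n) (δ n) C) ∧ Tendsto δ atTop (𝓝 0) ∧
      (∀ n, IsCcSmooth Ω (φ n)) ∧
      TendstoUniformlyOn (fun n x => φ n x - ∫ y, Ω.indicator v y ∂κ n x) 0 atTop Ω ∧
      TendstoUniformlyOn (fun n x => smoothJac (φ n) x - ∫ y, Ω.indicator Dv y ∂κ n x) 0
        atTop Ω := by
  obtain ⟨⟨hvp, hDv, -⟩, w, hw, hwv, hwDv⟩ := hv
  simp only [funext (smoothJac_eq _)] at hwDv
  obtain ⟨κ, δ, C, φ, hκ, hδ, hφ, hφv, hφDv⟩ := exists_seq_isLocalAverage_tendstoUniformlyOn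
    (jacobianEquiv d m) hΩm hΩb hΩ hp hpd (fun k => (hw k).1) (fun k => (hw k).2.1)
    (fun k => (hw k).2.2) hvp hDv hwv hwDv
  exact ⟨κ, δ, C, φ, hκ, hδ, fun n => ⟨(hφ n).1, isCompact_of_isClosed_isBounded
    (isClosed_tsupport _) (hΩb.subset (hφ n).2), (hφ n).2⟩, hφv, by simpa only [smoothJac_eq]⟩

end Jacobians

section RecoverySequences

open ProbabilityTheory (Kernel)

theorem exists_seq_tendsto_comp {ι X : Type*} [TopologicalSpace X] [FirstCountableTopology X]
    {l : Filter ι} [l.NeBot] {f : ι → X} {x : X} (hf : Tendsto f l (𝓝 x)) :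
    ∃ i : ℕ → ι, Tendsto (f ∘ i) atTop (𝓝 x) := by
  obtain ⟨y, hy, hlim⟩ := mem_closure_iff_seq_limit.1
    (mem_closure_of_tendsto hf (Eventually.of_forall mem_range_self))
  choose i hi using hy
  exact ⟨i, hlim.congr fun n => (hi n).symm⟩

theorem tendsto_curry_of_tendsto_tendsto {ι κ X : Type*} [TopologicalSpace X] {l : Filter ι}
    {l' : Filter κ} {f : ι → κ → X} {g : ι → X} {x : X} (hf : ∀ i, Tendsto (f i) l' (𝓝 (g i)))
    (hg : Tendsto g l (𝓝 x)) : Tendsto (fun q : ι × κ => f q.1 q.2) (l.curry l') (𝓝 x) :=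
  (nhds_basis_opens x).tendsto_right_iff.2 fun _ ⟨hx, hU⟩ => eventually_curry_iff.2 <|
    (hg.eventually (hU.mem_nhds hx)).mono fun i hi => (hf i).eventually (hU.mem_nhds hi)

section Lebesgue

variable {α F : Type*} [MeasurableSpace α] [NormedAddCommGroup F] {μ : Measure α} {q : ℝ≥0∞}

theorem tendsto_curry_eLpNorm_sub (hq : 1 ≤ q) {f : ℕ → ℕ → α → F} {g : ℕ → α → F} {h : α → F}
    (hf : ∀ k n, AEStronglyMeasurable (f k n) μ) (hg : ∀ k, AEStronglyMeasurable (g k) μ)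
    (hh : AEStronglyMeasurable h μ)
    (hfg : ∀ k, Tendsto (fun n => eLpNorm (f k n - g k) q μ) atTop (𝓝 0))
    (hgh : Tendsto (fun k => eLpNorm (g k - h) q μ) atTop (𝓝 0)) :
    Tendsto (fun k : ℕ × ℕ => eLpNorm (f k.1 k.2 - h) q μ) (atTop.curry atTop) (𝓝 0) := by
  have hsum := tendsto_curry_of_tendsto_tendsto
    (fun k => (hfg k).add_const (eLpNorm (g k - h) q μ)) (by simpa only [zero_add] using hgh)
  refine tendsto_of_tendsto_of_tendsto_of_le_of_le tendsto_const_nhds hsum (fun _ => zero_le)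
    fun k => ?_
  rw [← sub_add_sub_cancel (f k.1 k.2) (g k.1) h]
  exact eLpNorm_add_le ((hf _ _).sub (hg _)) ((hg _).sub hh) hq

theorem tendsto_eLpNorm_const_smul_sub [NormedSpace ℝ F] (s : ℝ) {f : ℕ → α → F} {g : α → F}
    (hf : Tendsto (fun n => eLpNorm (f n - g) q μ) atTop (𝓝 0)) :
    Tendsto (fun n => eLpNorm (s • f n - s • g) q μ) atTop (𝓝 0) := by
  simp only [← smul_sub, eLpNorm_const_smul]
  simpa only [mul_zero] using ENNReal.Tendsto.const_mul hf (Or.inr enorm_ne_top)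

theorem tendsto_eLpNorm_smul_sub_self [NormedSpace ℝ F] {s : ℕ → ℝ} (hs : Tendsto s atTop (𝓝 1))
    {f : α → F} (hf : MemLp f q μ) : Tendsto (fun k => eLpNorm (s k • f - f) q μ) atTop (𝓝 0) := by
  have hs0 : Tendsto (fun k => ‖s k - 1‖ₑ) atTop (𝓝 0) := by
    simpa only [edist_eq_enorm_sub] using tendsto_iff_edist_tendsto_0.1 hs
  have hlim := ENNReal.Tendsto.mul_const hs0 (Or.inr hf.2.ne)
  rw [zero_mul] at hlim
  refine hlim.congr fun k => ?_
  rw [← eLpNorm_const_smul, sub_smul, one_smul]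

theorem tendsto_eLpNorm_sub_of_tendstoUniformlyOn (hq : 1 ≤ q) {s : Set α} (hs : MeasurableSet s)
    (hμs : μ s ≠ ⊤) {f X : ℕ → α → F} {g : α → F}
    (hf : ∀ n, AEStronglyMeasurable (f n) (μ.restrict s))
    (hX : ∀ n, AEStronglyMeasurable (X n) (μ.restrict s))
    (hg : AEStronglyMeasurable g (μ.restrict s))
    (hfX : TendstoUniformlyOn (fun n x => f n x - X n x) 0 atTop s)
    (hXg : Tendsto (fun n => eLpNorm (X n - g) q (μ.restrict s)) atTop (𝓝 0)) :
    Tendsto (fun n => eLpNorm (f n - g) q (μ.restrict s)) atTop (𝓝 0) := by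
  have : IsFiniteMeasure (μ.restrict s) := isFiniteMeasure_restrict.2 hμs
  have hfX0 : Tendsto (fun n => eLpNorm (f n - X n) q (μ.restrict s)) atTop (𝓝 0) := by
    set K := μ.restrict s univ ^ q.toReal⁻¹
    have hK : K ≠ ⊤ := ENNReal.rpow_ne_top_of_nonneg (by positivity) (measure_ne_top _ _)
    have hK0 : Tendsto (fun ε : ℝ => K * ENNReal.ofReal ε) (𝓝 0) (𝓝 0) := by
      simpa using ENNReal.Tendsto.const_mul (ENNReal.tendsto_ofReal (tendsto_id (x := 𝓝 0)))
        (Or.inr hK)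
    refine ENNReal.tendsto_nhds_zero.2 fun η hη => ?_
    obtain ⟨ε, hε, hε0⟩ := (((ENNReal.tendsto_nhds_zero.1 hK0 η hη).filter_mono
      nhdsWithin_le_nhds).and (self_mem_nhdsWithin (s := Ioi 0))).exists
    filter_upwards [SeminormedAddGroup.tendstoUniformlyOn_zero.1 hfX ε hε0] with n hn
    exact (eLpNorm_le_of_ae_bound ((ae_restrict_mem hs).mono fun x hx => (hn x hx).le)).trans hε
  have hsum := hfX0.add hXg
  rw [add_zero] at hsum
  refine tendsto_of_tendsto_of_tendsto_of_le_of_le tendsto_const_nhds hsum (fun _ => zero_le)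
    fun n => ?_
  rw [← sub_add_sub_cancel (f n) (X n) g]
  exact eLpNorm_add_le ((hf n).sub (hX n)) ((hX n).sub hg) hq

end Lebesgue

variable {d m : ℕ} {Ω : Set (Euc d)}

theorem tendsto_eLpNorm_sub_of_isLocalAverage {F : Type*} [NormedAddCommGroup F] [NormedSpace ℝ F]
    [CompleteSpace F] {q : ℝ≥0∞} (hΩ : MeasurableSet Ω) (hΩb : Bornology.IsBounded Ω) (hq : 1 ≤ q)
    (hq' : q ≠ ⊤) {κ : ℕ → Kernel (Euc d) (Euc d)} {δ : ℕ → ℝ} {C : ℝ≥0}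
    (hκ : ∀ n, IsLocalAverage volume (κ n) (δ n) C) (hδ : Tendsto δ atTop (𝓝 0))
    {f : ℕ → Euc d → F} {g : Euc d → F} (hf : ∀ n, AEStronglyMeasurable (f n))
    (hg : MemLp g q (volume.restrict Ω))
    (hfg : TendstoUniformlyOn (fun n x => f n x - ∫ y, Ω.indicator g y ∂κ n x) 0 atTop Ω) :
    Tendsto (fun n => eLpNorm (f n - g) q (volume.restrict Ω)) atTop (𝓝 0) := by
  have hgΩ := (integrable_memLp_indicator hΩ hΩb hq hg).2
  refine tendsto_eLpNorm_sub_of_tendstoUniformlyOn hq hΩ hΩb.measure_lt_top.ne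
    (fun n => (hf n).restrict)
    (fun n => ((hκ n).stronglyMeasurable_integral hgΩ.1).aestronglyMeasurable) hg.1 hfg ?_
  refine tendsto_of_tendsto_of_tendsto_of_le_of_le tendsto_const_nhds
    (IsLocalAverage.tendsto_eLpNorm_integral_sub hκ hδ hq hq' hgΩ) (fun _ => zero_le) fun n => ?_
  refine (eLpNorm_congr_ae ?_).trans_le (eLpNorm_mono_measure _ Measure.restrict_le_self)
  filter_upwards [ae_restrict_mem hΩ] with x hx
  simp only [Pi.sub_apply, indicator_of_mem hx]

/-- `v`, with Jacobian `Dv`, is a `W^{1,q}`-limit of maps in `C_c^∞(Ω)^m` along which the energy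
`E`, a functional of the Jacobian, converges to its value at `Dv`. -/
def HasRecoverySequence (Ω : Set (Euc d)) (q : ℝ≥0∞) (E : (Euc d → Mat m d) → ℝ≥0∞)
    (v : Euc d → Euc m) (Dv : Euc d → Mat m d) : Prop :=
  ∃ φ : ℕ → Euc d → Euc m, (∀ n, IsCcSmooth Ω (φ n)) ∧
    TendstoW1p Ω q φ (fun n => smoothJac (φ n)) v Dv ∧
    Tendsto (fun n => E (smoothJac (φ n))) atTop (𝓝 (E Dv))

theorem HasRecoverySequence.of_tendsto {q : ℝ≥0∞} {E : (Euc d → Mat m d) → ℝ≥0∞} (hq : 1 ≤ q)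
    {v : ℕ → Euc d → Euc m} {Dv : ℕ → Euc d → Mat m d} {u : Euc d → Euc m}
    {Du : Euc d → Mat m d} (hrec : ∀ k, HasRecoverySequence Ω q E (v k) (Dv k))
    (hv : ∀ k, AEStronglyMeasurable (v k) (volume.restrict Ω))
    (hDv : ∀ k, AEStronglyMeasurable (Dv k) (volume.restrict Ω))
    (hu : AEStronglyMeasurable u (volume.restrict Ω))
    (hDu : AEStronglyMeasurable Du (volume.restrict Ω)) (hlim : TendstoW1p Ω q v Dv u Du)
    (hE : Tendsto (fun k => E (Dv k)) atTop (𝓝 (E Du))) : HasRecoverySequence Ω q E u Du := by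
  choose φ hφ hφv hφE using hrec
  have hcurry := (tendsto_curry_eLpNorm_sub hq
      (fun k n => (hφ k n).1.continuous.aestronglyMeasurable) hv hu (fun k => (hφv k).1)
      hlim.1).prodMk_nhds
    ((tendsto_curry_eLpNorm_sub hq (fun k n => (hφ k n).continuous_smoothJac.aestronglyMeasurable)
      hDv hDu (fun k => (hφv k).2) hlim.2).prodMk_nhds (tendsto_curry_of_tendsto_tendsto hφE hE))
  have : ((atTop : Filter ℕ).curry (atTop : Filter ℕ)).NeBot := by
    simp [← frequently_true_iff_neBot, frequently_curry_iff]
  obtain ⟨i, hi⟩ := exists_seq_tendsto_comp hcurry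
  exact ⟨fun n => φ (i n).1 (i n).2, fun n => hφ _ _,
    ⟨hi.fst_nhds, hi.snd_nhds.fst_nhds⟩, hi.snd_nhds.snd_nhds⟩

theorem smoothJac_smul (s : ℝ) (φ : Euc d → Euc m) : smoothJac (s • φ) = s • smoothJac φ := by
  funext x
  simp only [smoothJac_eq, fderiv_const_smul_field, Pi.smul_apply, map_smul]

namespace IsCcSmooth

variable {φ : Euc d → Euc m}

theorem smul (hφ : IsCcSmooth Ω φ) (s : ℝ) : IsCcSmooth Ω (s • φ) :=
  ⟨hφ.1.const_smul s, hφ.2.1.smul_left (f := fun _ => s),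
    (tsupport_smul_subset_right (fun _ => s) φ).trans hφ.2.2⟩

theorem hasCompactSupport_smoothJac (hφ : IsCcSmooth Ω φ) : HasCompactSupport (smoothJac φ) := by
  rw [funext (smoothJac_eq φ)]
  exact (hφ.2.1.fderiv ℝ).comp_left (map_zero _)

theorem isWeakJacobianOn_smoothJac (hφ : IsCcSmooth Ω φ) :
    IsWeakJacobianOn Ω φ (smoothJac φ) := by
  intro ψ hψ hψc hψΩ i j
  have hφd : Differentiable ℝ φ := hφ.1.differentiable (by simp)
  have hφi : Continuous fun x => φ x i :=
    (EuclideanSpace.proj i : Euc m →L[ℝ] ℝ).continuous.comp hφ.1.continuous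
  have hφic : HasCompactSupport fun x => φ x i := hφ.2.1.comp_left (g := fun y : Euc m => y i) rfl
  have hJ : Continuous fun x => smoothJac φ x i j :=
    (continuous_apply_apply i j).comp hφ.continuous_smoothJac
  have hderiv (x : Euc d) : HasFDerivAt (fun y => φ y i)
      ((EuclideanSpace.proj i : Euc m →L[ℝ] ℝ).comp (fderiv ℝ φ x)) x :=
    (EuclideanSpace.proj i : Euc m →L[ℝ] ℝ).hasFDerivAt.comp x (hφd x).hasFDerivAt
  have hfd (x : Euc d) :
      fderiv ℝ (fun y => φ y i) x (EuclideanSpace.single j 1) = smoothJac φ x i j := by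
    rw [(hderiv x).fderiv]
    rfl
  have hparts := integral_mul_fderiv_eq_neg_fderiv_mul_of_integrable (μ := volume)
    (f := fun x => φ x i) (g := ψ) (v := EuclideanSpace.single j (1 : ℝ))
    (by simp only [hfd]; exact (hJ.mul hψ.continuous).integrable_of_hasCompactSupport hψc.mul_left)
    ((hφi.mul ((hψ.continuous_fderiv (by simp)).clm_apply continuous_const)
      ).integrable_of_hasCompactSupport hφic.mul_right)
    ((hφi.mul hψ.continuous).integrable_of_hasCompactSupport hφic.mul_right)
    (fun x _ => (hderiv x).differentiableAt) (fun x _ => hψ.differentiable (by simp) x)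
  have hφ0 {x : Euc d} (hx : x ∉ Ω) : φ x = 0 :=
    image_eq_zero_of_notMem_tsupport fun h => hx (hφ.2.2 h)
  have hψ0 {x : Euc d} (hx : x ∉ Ω) : ψ x = 0 :=
    image_eq_zero_of_notMem_tsupport fun h => hx (hψΩ h)
  rw [setIntegral_eq_integral_of_forall_compl_eq_zero fun x hx => by simp [hφ0 hx],
    setIntegral_eq_integral_of_forall_compl_eq_zero fun x hx => by simp [hψ0 hx]]
  simpa only [hfd] using hparts

theorem memW1p0 (hφ : IsCcSmooth Ω φ) (q : ℝ≥0∞) : MemW1p0 Ω q φ (smoothJac φ) :=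
  ⟨⟨(hφ.1.continuous.memLp_of_hasCompactSupport hφ.2.1).restrict _,
      (hφ.continuous_smoothJac.memLp_of_hasCompactSupport
        hφ.hasCompactSupport_smoothJac).restrict _,
      hφ.isWeakJacobianOn_smoothJac⟩,
    fun _ => φ, fun _ => hφ, by simp, by simp⟩

end IsCcSmooth

theorem sInf_energy_eq_of_hasRecoverySequence {q : ℝ≥0∞} {E : (Euc d → Mat m d) → ℝ≥0∞}
    (h : ∀ v Dv, MemW1p0 Ω q v Dv → HasRecoverySequence Ω q E v Dv) :
    sInf {e : ℝ≥0∞ | ∃ (v : Euc d → Euc m) (Dv : Euc d → Mat m d),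
        MemW1p0 Ω q v Dv ∧ e = E Dv} =
      sInf {e : ℝ≥0∞ | ∃ φ : Euc d → Euc m, IsCcSmooth Ω φ ∧ e = E (smoothJac φ)} := by
  refine le_antisymm (sInf_le_sInf ?_) (le_sInf ?_)
  · rintro e ⟨φ, hφ, rfl⟩
    exact ⟨φ, smoothJac φ, hφ.memW1p0 q, rfl⟩
  · rintro e ⟨v, Dv, hv, rfl⟩
    obtain ⟨φ, hφ, -, hlim⟩ := h v Dv hv
    exact ge_of_tendsto' hlim fun n => sInf_le ⟨φ n, hφ n, rfl⟩

variable {p : ℝ} {W : Euc d → Mat m d → ℝ≥0∞} {A : Euc d → Mat m d} {v : Euc d → Euc m}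
  {Dv : Euc d → Mat m d}

theorem MemW1p0.hasRecoverySequence_smul (hv : MemW1p0 Ω (ENNReal.ofReal p) v Dv)
    (hΩ : MeasurableSet Ω) (hΩb : Bornology.IsBounded Ω) (hΩl : HasLipschitzBoundary Ω)
    (hp : 1 ≤ p) (hpd : (d : ℝ) - 1 < p) (hW : IsStableIntegrand Ω p W)
    (hA : MemLp A ⊤ (volume.restrict Ω)) (hE : ∫⁻ x in Ω, W x (A x + Dv x) ≠ ⊤) {s : ℝ}
    (hs0 : 0 ≤ s) (hs1 : s < 1) :
    HasRecoverySequence Ω (ENNReal.ofReal p) (fun X => ∫⁻ x in Ω, W x (A x + X x)) (s • v)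
      (s • Dv) := by
  obtain ⟨κ, δ, C, φ, hκ, hδ, hφ, hφv, hφDv⟩ := hv.exists_seq_isLocalAverage hΩ hΩb hΩl hp hpd
  have hp1 : 1 ≤ ENNReal.ofReal p := by simpa using hp
  have hJ (n : ℕ) : Continuous (smoothJac (φ n)) := (hφ n).continuous_smoothJac
  refine ⟨fun n => s • φ n, fun n => (hφ n).smul s, ⟨?_, ?_⟩, ?_⟩ <;> simp only [smoothJac_smul]
  · exact tendsto_eLpNorm_const_smul_sub s <|
      tendsto_eLpNorm_sub_of_isLocalAverage hΩ hΩb hp1 ENNReal.ofReal_ne_top hκ hδ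
        (fun n => (hφ n).1.continuous.aestronglyMeasurable) hv.1.1 hφv
  · exact tendsto_eLpNorm_const_smul_sub s <|
      tendsto_eLpNorm_sub_of_isLocalAverage hΩ hΩb hp1 ENNReal.ofReal_ne_top hκ hδ
        (fun n => (hJ n).aestronglyMeasurable) hv.1.2.1 hφDv
  · exact hW.tendsto_lintegral_add_smul hΩ hΩb hp hA hv.1.2.1 hE hs0 hs1 hκ hδ
      (fun n => (hJ n).measurable) hφDv

theorem IsStableIntegrand.tendsto_lintegral_add_smul_one (hW : IsStableIntegrand Ω p W)
    (hΩ : MeasurableSet Ω) (hA : MemLp A ⊤ (volume.restrict Ω))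
    (hDv : AEMeasurable Dv (volume.restrict Ω)) (hE : ∫⁻ x in Ω, W x (A x + Dv x) ≠ ⊤) {s : ℕ → ℝ}
    (hs : ∀ k, s k ∈ Icc 0 1) (hs1 : Tendsto s atTop (𝓝 1)) :
    Tendsto (fun k => ∫⁻ x in Ω, W x (A x + s k • Dv x)) atTop
      (𝓝 (∫⁻ x in Ω, W x (A x + Dv x))) := by
  obtain ⟨r, hr⟩ := exists_ae_norm_indicator_le hΩ hA
  obtain ⟨Γ, hΓm, hΓ, hΓ_le⟩ := exists_integrable_bound_on_closedBall
    (fun ξ => (hW.measurable_apply ξ).aemeasurable) hW.lt_top hW.lintegral_lt_top r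
  refine tendsto_lintegral_of_le_add (G := fun x => W x (A x + Dv x) + Γ x) (e := fun _ _ => 0)
    (fun k => hW.aemeasurable_comp (hA.1.aemeasurable.add (hDv.const_smul (s k))))
    (fun _ => aemeasurable_const) ?_ (by simp) (by simp) (Eventually.of_forall fun k => ?_) ?_
  · rw [lintegral_add_right' _ hΓm]
    exact ENNReal.add_ne_top.2 ⟨hE, hΓ.ne⟩
  · filter_upwards [hW.ae_convex, ae_restrict_of_ae hr, ae_restrict_mem hΩ] with x hcx hrx hx
    rw [indicator_of_mem hx] at hrx
    calc W x (A x + s k • Dv x) = W x (s k • (A x + Dv x) + (1 - s k) • A x) := by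
          congr 1; module
      _ ≤ ENNReal.ofReal (s k) * W x (A x + Dv x) + ENNReal.ofReal (1 - s k) * W x (A x) :=
        hcx _ _ _ (hs k).1 (hs k).2
      _ ≤ 1 * W x (A x + Dv x) + 1 * Γ x := by
        gcongr
        · simpa using (hs k).2
        · simpa using (hs k).1
        · exact hΓ_le x hcx _ hrx
      _ = W x (A x + Dv x) + Γ x + 0 := by ring
  · filter_upwards [hW.ae_continuous] with x hx
    exact (hx.tendsto' _ _ (by simp)).comp ((hs1.smul_const (Dv x)).const_add (A x))

theorem MemW1p0.hasRecoverySequence_of_ne_top (hv : MemW1p0 Ω (ENNReal.ofReal p) v Dv)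
    (hΩ : MeasurableSet Ω) (hΩb : Bornology.IsBounded Ω) (hΩl : HasLipschitzBoundary Ω)
    (hp : 1 ≤ p) (hpd : (d : ℝ) - 1 < p) (hW : IsStableIntegrand Ω p W)
    (hA : MemLp A ⊤ (volume.restrict Ω)) (hE : ∫⁻ x in Ω, W x (A x + Dv x) ≠ ⊤) :
    HasRecoverySequence Ω (ENNReal.ofReal p) (fun X => ∫⁻ x in Ω, W x (A x + X x)) v Dv := by
  obtain ⟨s, -, hs, hs1⟩ := exists_seq_strictMono_tendsto' (zero_lt_one (α := ℝ))
  obtain ⟨hvp, hDvp, -⟩ := hv.1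
  exact .of_tendsto (by simpa using hp)
    (fun k => hv.hasRecoverySequence_smul hΩ hΩb hΩl hp hpd hW hA hE (hs k).1.le (hs k).2)
    (fun k => hvp.1.const_smul (s k)) (fun k => hDvp.1.const_smul (s k)) hvp.1 hDvp.1
    ⟨tendsto_eLpNorm_smul_sub_self hs1 hvp, tendsto_eLpNorm_smul_sub_self hs1 hDvp⟩
    (hW.tendsto_lintegral_add_smul_one hΩ hA hDvp.1.aemeasurable hE
      (fun k => Ioo_subset_Icc_self (hs k)) hs1)

theorem MemW1p0.hasRecoverySequence_of_eq_top (hv : MemW1p0 Ω (ENNReal.ofReal p) v Dv)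
    (hp : 0 < p) (hW : IsStableIntegrand Ω p W) (hA : AEMeasurable A (volume.restrict Ω))
    (hE : ∫⁻ x in Ω, W x (A x + Dv x) = ⊤) :
    HasRecoverySequence Ω (ENNReal.ofReal p) (fun X => ∫⁻ x in Ω, W x (A x + X x)) v Dv := by
  obtain ⟨⟨-, hDv, -⟩, w, hw, hwv, hwDv⟩ := hv
  obtain ⟨i, hi, hae⟩ := (tendstoInMeasure_of_tendsto_eLpNorm (by simpa using hp)
    (fun n => (hw n).continuous_smoothJac.aestronglyMeasurable) hDv.1 hwDv).exists_seq_tendsto_ae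
  refine ⟨w ∘ i, fun n => hw _, ⟨hwv.comp hi.tendsto_atTop, hwDv.comp hi.tendsto_atTop⟩, ?_⟩
  have fatou := lintegral_liminf_le' (μ := volume.restrict Ω) (u := (atTop : Filter ℕ))
    (f := fun n x => W x (A x + smoothJac (w (i n)) x)) fun n =>
      hW.aemeasurable_comp (hA.add (hw _).continuous_smoothJac.measurable.aemeasurable)
  have hliminf : ∫⁻ x in Ω, liminf (fun n => W x (A x + smoothJac (w (i n)) x)) atTop =
      ∫⁻ x in Ω, W x (A x + Dv x) := by
    refine lintegral_congr_ae ?_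
    filter_upwards [hW.ae_continuous, hae] with x hcx hx
    exact ((hcx.tendsto _).comp (hx.const_add (A x))).liminf_eq
  rw [hliminf, hE] at fatou
  simp only [hE]
  exact tendsto_of_le_liminf_of_limsup_le fatou le_top

end RecoverySequences

theorem no_lavrentiev_gap_locally_bounded_general {d m : ℕ} {Ω : Set (Euc d)}
    (hΩ : MeasurableSet Ω) (hΩb : Bornology.IsBounded Ω) (hΩl : HasLipschitzBoundary Ω) {p : ℝ}
    (hp : 1 ≤ p) (hpd : (d : ℝ) - 1 < p) {W : Euc d → Mat m d → ℝ≥0∞}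
    (hW : IsStableIntegrand Ω p W) {A : Euc d → Mat m d} (hA : MemLp A ⊤ (volume.restrict Ω)) :
    (∀ (v : Euc d → Euc m) (Dv : Euc d → Mat m d), MemW1p0 Ω (ENNReal.ofReal p) v Dv →
        HasRecoverySequence Ω (ENNReal.ofReal p) (fun X => ∫⁻ x in Ω, W x (A x + X x)) v Dv) ∧
    sInf {e : ℝ≥0∞ | ∃ (v : Euc d → Euc m) (Dv : Euc d → Mat m d),
        MemW1p0 Ω (ENNReal.ofReal p) v Dv ∧ e = ∫⁻ x in Ω, W x (A x + Dv x)} =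
      sInf {e : ℝ≥0∞ | ∃ φ : Euc d → Euc m, IsCcSmooth Ω φ ∧
        e = ∫⁻ x in Ω, W x (A x + smoothJac φ x)} := by
  have hrec (v : Euc d → Euc m) (Dv : Euc d → Mat m d) (hv : MemW1p0 Ω (ENNReal.ofReal p) v Dv) :
      HasRecoverySequence Ω (ENNReal.ofReal p) (fun X => ∫⁻ x in Ω, W x (A x + X x)) v Dv := by
    by_cases hE : ∫⁻ x in Ω, W x (A x + Dv x) = ⊤
    · exact hv.hasRecoverySequence_of_eq_top (by linarith) hW hA.1.aemeasurable hE
    · exact hv.hasRecoverySequence_of_ne_top hΩ hΩb hΩl hp hpd hW hA hE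
  exact ⟨hrec, sInf_energy_eq_of_hasRecoverySequence hrec⟩

/-- **Corollary 2.5.** Let `Ω ⊂ ℝ^d` be a bounded open set with Lipschitz
boundary, `p > d−1`, and let `W` satisfy Assumption 1 with finite values and
`x ↦ W(x,ξ) ∈ L¹(Ω)` for every `ξ`. Let `g ∈ W^{1,∞}(Ω)^m`. Then every
`u = g + v ∈ g + W_0^{1,p}(Ω)^m` can be approximated by `u_n = g + φ_n ∈ g + C_c^∞(Ω)^m`
strongly in `W^{1,p}` with convergence of the energies; in particular the infima of the
energy over `g + W_0^{1,p}(Ω)^m` and over `g + C_c^∞(Ω)^m` coincide. -/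
theorem no_lavrentiev_gap_locally_bounded
    (d m : ℕ) (Ω : Set (Euc d)) (hΩo : IsOpen Ω) (hΩb : Bornology.IsBounded Ω)
    (hΩl : HasLipschitzBoundary Ω)
    (p : ℝ) (hp1 : 1 ≤ p) (hpd : (d : ℝ) - 1 < p)
    (W : Euc d → Mat m d → ℝ≥0∞) (hWfin : ∀ x ξ, W x ξ < ⊤)
    (hW : Assumption1 Ω p W)
    (hWint : ∀ ξ : Mat m d, (∫⁻ x in Ω, W x ξ) < ⊤)
    (g : Euc d → Euc m) (Dg : Euc d → Mat m d)
    (hg : MemW1p Ω ⊤ g Dg) :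
    (∀ (v : Euc d → Euc m) (Dv : Euc d → Mat m d),
        MemW1p0 Ω (ENNReal.ofReal p) v Dv →
        ∃ φ : ℕ → Euc d → Euc m, (∀ n, IsCcSmooth Ω (φ n)) ∧
          TendstoW1p Ω (ENNReal.ofReal p) φ (fun n => smoothJac (φ n)) v Dv ∧
          Tendsto (fun n => ∫⁻ x in Ω, W x (Dg x + smoothJac (φ n) x)) atTop
            (𝓝 (∫⁻ x in Ω, W x (Dg x + Dv x)))) ∧
    sInf {e : ℝ≥0∞ | ∃ (v : Euc d → Euc m) (Dv : Euc d → Mat m d),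
        MemW1p0 Ω (ENNReal.ofReal p) v Dv ∧ e = ∫⁻ x in Ω, W x (Dg x + Dv x)} =
      sInf {e : ℝ≥0∞ | ∃ φ : Euc d → Euc m, IsCcSmooth Ω φ ∧
        e = ∫⁻ x in Ω, W x (Dg x + smoothJac φ x)} := by
  exact no_lavrentiev_gap_locally_bounded_general hΩo.measurableSet hΩb hΩl hp1 hpd
    ⟨hW.1, hWfin, hW.2.1.mono fun _ h => h.1, hW.2.2.2.2, hWint⟩ hg.2.1

end
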